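/- arXiv:2001.01308 — 3 statements merged into one kernel-verified Lean document; each statement's English description precedes it below -/
import Mathlib

section
/- Every finite 3-subgroup of PGL₃(ℂ) can be generated by 2 elements. -/
open Matrix

/-- A group `G` can be generated by at most `m` elements. -/
def GeneratedByAtMost (G : Type*) [Group G] (m : ℕ) : Prop :=
  ∃ S : Finset G, S.card ≤ m ∧ Subgroup.closure (S : Set G) = ⊤

theorem generatedByAtMost_two_of_closure_pair {G : Type*} [Group G] {a b : G}
    (h : Subgroup.closure {a, b} = ⊤) : GeneratedByAtMost G 2 := by
  classical
  exact ⟨{a, b}, Finset.card_le_two, by simpa using h⟩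

theorem IsPGroup.commutator_le_of_isCoatom {p : ℕ} [Fact p.Prime] {G : Type*} [Group G] [Finite G]
    (hG : IsPGroup p G) {M : Subgroup G} (hM : IsCoatom M) : commutator G ≤ M := by
  have := hG.isNilpotent
  have : M.Normal :=
    Subgroup.NormalizerCondition.normal_of_coatom M Group.normalizerCondition_of_isNilpotent hM
  rw [← Subgroup.Normal.quotient_commutative_iff_commutator_le]
  have hQ : IsPGroup p (G ⧸ M) := hG.to_quotient M
  have : Nontrivial (G ⧸ M) := QuotientGroup.nontrivial_iff.2 hM.1
  have hc := hQ.center_nontrivial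
  have hlt : M < (Subgroup.center (G ⧸ M)).comap (QuotientGroup.mk' M) := by
    conv_lhs => rw [← QuotientGroup.ker_mk' M, ← MonoidHom.comap_bot]
    rw [Subgroup.comap_lt_comap_of_surjective (QuotientGroup.mk'_surjective M)]
    exact bot_lt_iff_ne_bot.2 ((Subgroup.nontrivial_iff_ne_bot _).1 hc)
  have htop := hM.2 _ hlt
  refine ⟨⟨fun a b => ?_⟩⟩
  obtain ⟨b, rfl⟩ := QuotientGroup.mk'_surjective M b
  exact Subgroup.mem_center_iff.1 (Subgroup.mem_comap.1 (htop ▸ Subgroup.mem_top b)) a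

theorem IsPGroup.eq_top_of_sup_commutator_eq_top {p : ℕ} [Fact p.Prime] {G : Type*} [Group G]
    [Finite G] (hG : IsPGroup p G) {N : Subgroup G} (hN : N ⊔ commutator G = ⊤) : N = ⊤ := by
  by_contra h
  obtain ⟨M, hM, hNM⟩ := (eq_top_or_exists_le_coatom N).resolve_left h
  exact hM.1 (top_le_iff.1 (hN ▸ sup_le hNM (hG.commutator_le_of_isCoatom hM)))

theorem generatedByAtMost_two_of_hom_units {G F : Type*} [Group G] [Finite G] [Field F]
    (f₁ f₂ : G →* Fˣ) (hf : ∀ x, f₁ x = 1 → f₂ x = 1 → x = 1) : GeneratedByAtMost G 2 := by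
  have : Finite f₁.range := Set.finite_range f₁
  have : IsCyclic f₁.range :=
    isCyclic_of_injective_ringHom ((Units.coeHom F).comp f₁.range.subtype)
      (Units.val_injective.comp Subtype.coe_injective)
  obtain ⟨⟨_, a, rfl⟩, ha⟩ := IsCyclic.exists_generator (α := f₁.range)
  have : IsCyclic f₁.ker := by
    refine isCyclic_of_injective_ringHom ((Units.coeHom F).comp (f₂.comp f₁.ker.subtype))
      (Units.val_injective.comp <| (injective_iff_map_eq_one _).2 fun x hx => Subtype.ext (hf x x.2 hx))
  obtain ⟨⟨b, hb1⟩, hb⟩ := IsCyclic.exists_generator (α := f₁.ker)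
  refine generatedByAtMost_two_of_closure_pair (a := a) (b := b) (top_le_iff.1 fun x _ => ?_)
  obtain ⟨k, hk⟩ := Subgroup.mem_zpowers_iff.1 (ha ⟨f₁ x, x, rfl⟩)
  have hk' : f₁ a ^ k = f₁ x := congrArg Subtype.val hk
  obtain ⟨l, hl⟩ := Subgroup.mem_zpowers_iff.1
    (hb ⟨a ^ (-k) * x, by simp [MonoidHom.mem_ker, ← hk']⟩)
  have hl' : b ^ l = a ^ (-k) * x := congrArg Subtype.val hl
  have hx : x = a ^ k * b ^ l := by rw [hl']; group
  rw [hx]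
  exact mul_mem (zpow_mem (Subgroup.subset_closure (by simp)) _)
    (zpow_mem (Subgroup.subset_closure (by simp)) _)

theorem generatedByAtMost_two_of_abelian_of_card_centralizer_le {p : ℕ} [Fact p.Prime]
    {G : Type*} [Group G] [Finite G]
    (hG : IsPGroup p G) (A : Subgroup G) (hA : ∀ x ∈ A, ∀ y ∈ A, x * y = y * x) (g : G)
    (hgA : ∀ x ∈ A, g * x * g⁻¹ ∈ A) (hgen : ∀ x, ∃ k : ℤ, g ^ k * x ∈ A)
    (hcard : Nat.card {x : G // x ∈ A ∧ g * x = x * g} ≤ p) : GeneratedByAtMost G 2 := by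
  let φ : A →* G :=
    { toFun := fun x => g * x * g⁻¹ * (x : G)⁻¹
      map_one' := by simp
      map_mul' := fun x y => by
        have h1 := hA _ (hgA y y.2) _ (inv_mem x.2)
        have h2 := hA _ (inv_mem y.2) _ (inv_mem x.2)
        calc g * (x * y : A) * g⁻¹ * ((x * y : A) : G)⁻¹
            = g * x * g⁻¹ * ((g * y * g⁻¹) * ((y : G)⁻¹ * (x : G)⁻¹)) := by
              push_cast; group
          _ = g * x * g⁻¹ * (((g * y * g⁻¹) * (x : G)⁻¹) * (y : G)⁻¹) := by rw [h2]; group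
          _ = _ := by rw [h1]; group }
  have hφA : φ.range ≤ A := by
    rintro _ ⟨x, rfl⟩
    exact mul_mem (hgA x x.2) (inv_mem x.2)
  have hφc : φ.range ≤ commutator G := by
    rintro _ ⟨x, rfl⟩
    exact Subgroup.commutator_mem_commutator (Subgroup.mem_top g) (Subgroup.mem_top (x : G))
  have hker : Nat.card φ.ker ≤ p := by
    refine le_trans (Nat.card_le_card_of_injective
      (fun x => (⟨x.1.1, x.1.2, ?_⟩ : {x : G // x ∈ A ∧ g * x = x * g})) ?_) hcard
    · have : g * x.1.1 * g⁻¹ * (x.1.1)⁻¹ = 1 := x.2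
      rwa [mul_inv_eq_one, mul_inv_eq_iff_eq_mul] at this
    · intro x y hxy
      exact Subtype.ext (Subtype.ext (by simpa using hxy))
  have hcardA : Nat.card A ≤ p * Nat.card φ.range := by
    rw [← φ.ker.card_mul_index, Subgroup.index_ker]
    exact Nat.mul_le_mul_right _ hker
  obtain ⟨a, haA, ha⟩ : ∃ a ∈ A, A ≤ Subgroup.zpowers a ⊔ φ.range := by
    by_cases h : A ≤ φ.range
    · exact ⟨1, one_mem _, h.trans le_sup_right⟩
    obtain ⟨a, haA, ha⟩ := SetLike.not_le_iff_exists.1 h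
    refine ⟨a, haA, ge_of_eq (Subgroup.eq_of_le_of_card_ge
      (sup_le (Subgroup.zpowers_le.2 haA) hφA) (hcardA.trans ?_))⟩
    have hlt : φ.range < Subgroup.zpowers a ⊔ φ.range :=
      lt_of_le_of_ne le_sup_right fun h => ha (h ▸ le_sup_left (a := Subgroup.zpowers a)
        (Subgroup.mem_zpowers a))
    obtain ⟨i, hi⟩ := IsPGroup.iff_card.1 (hG.to_subgroup φ.range)
    obtain ⟨j, hj⟩ := IsPGroup.iff_card.1 (hG.to_subgroup (Subgroup.zpowers a ⊔ φ.range))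
    have hc : Nat.card φ.range < Nat.card (Subgroup.zpowers a ⊔ φ.range : Subgroup G) := by
      by_contra hc
      exact hlt.ne (Subgroup.eq_of_le_of_card_ge hlt.le (not_lt.1 hc))
    have hp := (Fact.out : p.Prime)
    rw [hi, hj] at hc
    rw [hi, hj, ← pow_succ']
    exact Nat.pow_le_pow_right hp.pos ((Nat.pow_lt_pow_iff_right hp.one_lt).1 hc)
  refine generatedByAtMost_two_of_closure_pair (a := g) (b := a)
    (hG.eq_top_of_sup_commutator_eq_top (top_le_iff.1 fun x _ => ?_))
  obtain ⟨k, hk⟩ := hgen x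
  have hsub : Subgroup.zpowers a ⊔ φ.range ≤ Subgroup.closure {g, a} ⊔ commutator G :=
    sup_le_sup (Subgroup.zpowers_le.2 (Subgroup.subset_closure (by simp))) hφc
  have hx : x = g ^ (-k) * (g ^ k * x) := by group
  rw [hx]
  exact mul_mem (zpow_mem (le_sup_left (a := Subgroup.closure {g, a})
    (Subgroup.subset_closure (by simp))) _) (hsub (ha hk))

section LinearAlgebra

open Module

variable {K V : Type*} [Field K] [AddCommGroup V] [Module K V]

theorem Module.End.isFinitelySemisimple_of_pow_eq_smul_one [CharZero K] {T : End K V} {n : ℕ}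
    {c : K} (hn : n ≠ 0) (hc : c ≠ 0) (h : T ^ n = c • 1) : T.IsFinitelySemisimple := by
  refine (Module.End.isSemisimple_of_squarefree_aeval_eq_zero
    (Polynomial.separable_X_pow_sub_C c (Nat.cast_ne_zero.2 hn) hc).squarefree
    ?_).isFinitelySemisimple
  simp [h, Algebra.algebraMap_eq_smul_one]

theorem Module.End.eq_smul_one_of_forall_hasEigenvalue [IsAlgClosed K] [FiniteDimensional K V]
    {T : End K V} (hT : T.IsFinitelySemisimple) {c : K} (h : ∀ μ, T.HasEigenvalue μ → μ = c) :
    T = c • 1 := by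
  have key : T.eigenspace c = ⊤ := by
    rw [eq_top_iff, ← Module.End.iSup_maxGenEigenspace_eq_top T]
    refine iSup_le fun μ => ?_
    rw [hT.maxGenEigenspace_eq_eigenspace]
    by_cases hμ : T.HasEigenvalue μ
    · rw [h μ hμ]
    · rw [not_not.1 (Module.End.hasEigenvalue_iff.not.1 hμ)]
      exact bot_le
  ext v
  exact Module.End.mem_eigenspace_iff.1 (key ▸ Submodule.mem_top : v ∈ T.eigenspace c)

theorem Module.End.pow_finrank_eq_one_of_mul_eq_smul_mul [FiniteDimensional K V] {a x : End K V}
    (ha : Function.Injective a) (hx : Function.Injective x) {μ : K} (h : a * x = μ • (x * a)) :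
    μ ^ finrank K V = 1 := by
  have hdet (y : End K V) (hy : Function.Injective y) : LinearMap.det y ≠ 0 := fun h0 =>
    (LinearMap.bot_lt_ker_of_det_eq_zero h0).ne' (LinearMap.ker_eq_bot.2 hy)
  have h2 := congrArg LinearMap.det h
  rw [map_mul, LinearMap.det_smul, map_mul, mul_comm (LinearMap.det x)] at h2
  exact mul_right_cancel₀ (mul_ne_zero (hdet a ha) (hdet x hx)) (by rw [one_mul, ← h2])

theorem Module.Basis.exists_smul_of_commute {ι : Type*} (b : Basis ι K V) {T x : End K V}
    {μ : ι → K} (hμ : Function.Injective μ) (hT : ∀ i, T (b i) = μ i • b i)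
    (hx : Commute x T) (i : ι) : ∃ r : K, x (b i) = r • b i := by
  have hrepr (w : V) (j : ι) : b.repr (T w) j = μ j * b.repr w j := by
    suffices h : (b.coord j) ∘ₗ T = μ j • b.coord j from LinearMap.congr_fun h w
    refine b.ext fun k => ?_
    by_cases hk : k = j
    · subst hk; simp [hT]
    · simp [hT, hk]
  refine ⟨b.repr (x (b i)) i, b.repr.injective (Finsupp.ext fun j => ?_)⟩
  by_cases hj : j = i
  · subst hj; simp
  · have h1 : T (x (b i)) = μ i • x (b i) := by
      rw [← map_smul, ← hT]; exact (LinearMap.congr_fun hx (b i)).symm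
    have h2 := hrepr (x (b i)) j
    rw [h1, map_smul, Finsupp.smul_apply, smul_eq_mul] at h2
    have h3 : b.repr (x (b i)) j = 0 := by
      by_contra h0
      exact hj (hμ (mul_right_cancel₀ h0 h2.symm))
    simp [h3, Ne.symm hj]

theorem Module.End.exists_basis_of_mul_eq_smul_mul [IsAlgClosed K] [FiniteDimensional K V]
    (hV : finrank K V = 3) {T S : End K V} (hT : Function.Injective T)
    (hS : Function.Injective S) {ξ : K} (hξ : ξ ≠ 1) (h : T * S = ξ • (S * T)) :
    ∃ (b : Basis (Fin 3) K V) (μ : Fin 3 → K), Function.Injective μ ∧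
      (∀ i, T (b i) = μ i • b i) ∧ S (b 0) = b 1 ∧ S (b 1) = b 2 := by
  have hξ3 : ξ ^ 3 = 1 := hV ▸ Module.End.pow_finrank_eq_one_of_mul_eq_smul_mul hT hS h
  have : Nontrivial V := Module.nontrivial_of_finrank_pos (R := K) (by omega)
  obtain ⟨l, hl⟩ := Module.End.exists_eigenvalue T
  obtain ⟨v, hv⟩ := hl.exists_hasEigenvector
  have hTv : T v = l • v := hv.apply_eq_smul
  have hl0 : l ≠ 0 := by
    rintro rfl
    exact hv.2 (hT (by rw [hTv, zero_smul, map_zero]))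
  have hTS (w : V) : T (S w) = ξ • S (T w) := LinearMap.congr_fun h w
  have hprim : IsPrimitiveRoot ξ 3 := by
    have := orderOf_eq_prime hξ3 hξ
    exact this ▸ IsPrimitiveRoot.orderOf ξ
  let μ : Fin 3 → K := fun i => ξ ^ (i : ℕ) * l
  let w : Fin 3 → V := fun i => (S ^ (i : ℕ)) v
  have hμ : Function.Injective μ := fun i j hij =>
    Fin.ext (hprim.pow_inj i.2 j.2 (mul_right_cancel₀ hl0 hij))
  have hw (n : ℕ) : T ((S ^ n) v) = (ξ ^ n * l) • (S ^ n) v := by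
    induction n with
    | zero => simp [hTv]
    | succ n ih =>
      rw [pow_succ' S, Module.End.mul_apply, hTS, ih, map_smul, smul_smul]
      congr 1; ring
  have hw0 (n : ℕ) : (S ^ n) v ≠ 0 := by
    induction n with
    | zero => simpa using hv.2
    | succ n ih =>
      rw [pow_succ' S, Module.End.mul_apply]
      exact fun h0 => ih (hS (by rw [h0, map_zero]))
  have hli : LinearIndependent K w :=
    Module.End.eigenvectors_linearIndependent' T μ hμ w fun i =>
      Module.End.hasEigenvector_iff.2 ⟨Module.End.mem_eigenspace_iff.2 (hw i), hw0 i⟩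
  refine ⟨basisOfLinearIndependentOfCardEqFinrank hli (by simp [hV]), μ, hμ, ?_, ?_, ?_⟩
  · intro i
    simpa using hw i
  · simp [w]
  · simp [w, pow_succ]

theorem MonoidHom.exists_joint_eigencharacters [IsAlgClosed K] [FiniteDimensional K V]
    {H : Type*} [Group H] (ρ : H →* End K V) {n : ℕ} (hV : finrank K V = n) (hn : n ≠ 0)
    (hcomm : ∀ x y, Commute (ρ x) (ρ y)) (hss : ∀ x, (ρ x).IsFinitelySemisimple) :
    ∃ e : Fin n → (H →* Kˣ), ∀ x (c : K), (∀ i, (e i x : K) = c) ↔ ρ x = c • 1 := by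
  classical
  have : Nontrivial V := Module.nontrivial_of_finrank_pos (R := K) (by omega)
  let p : (H → K) → Submodule K V := fun χ => ⨅ x, (ρ x).maxGenEigenspace (χ x)
  have hp : iSupIndep p := Module.End.independent_iInf_maxGenEigenspace_of_forall_mapsTo _
    fun i j φ => Module.End.mapsTo_maxGenEigenspace_of_comm (hcomm j i) φ
  have htop : ⨆ χ, p χ = ⊤ :=
    Module.End.iSup_iInf_maxGenEigenspace_eq_top_of_iSup_maxGenEigenspace_eq_top_of_commute _
      (fun i j _ => hcomm i j) fun i => Module.End.iSup_maxGenEigenspace_eq_top _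
  have hev (χ : H → K) (v : V) (hv : v ∈ p χ) (x : H) : ρ x v = χ x • v := by
    have := (Submodule.mem_iInf _).1 hv x
    rw [(hss x).maxGenEigenspace_eq_eigenspace] at this
    exact Module.End.mem_eigenspace_iff.1 this
  have hhom (χ : {χ // p χ ≠ ⊥}) : ∃ f : H →* Kˣ, ∀ x, (f x : K) = χ.1 x := by
    obtain ⟨v, hv, hv0⟩ := Submodule.exists_mem_ne_zero_of_ne_bot χ.2
    let f : H →* K :=
      { toFun := χ.1
        map_one' := smul_left_injective K hv0 (by simp [← hev _ v hv])
        map_mul' := fun x y => smul_left_injective K hv0 (by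
          simp only [← hev _ v hv, map_mul, Module.End.mul_apply]
          rw [hev _ v hv y, map_smul, hev _ v hv x, smul_smul, mul_comm]) }
    exact ⟨f.toHomUnits, fun x => rfl⟩
  choose F hF using hhom
  have : Finite {χ // p χ ≠ ⊥} := (WellFoundedGT.finite_ne_bot_of_iSupIndep hp).to_subtype
  have := Fintype.ofFinite {χ // p χ ≠ ⊥}
  have hcard : Fintype.card {χ // p χ ≠ ⊥} ≤ Fintype.card (Fin n) := by
    simpa [hV] using hp.subtype_ne_bot_le_finrank
  have hne : Nonempty {χ // p χ ≠ ⊥} := by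
    by_contra hne
    have hbot : ∀ χ, p χ = ⊥ := fun χ => not_not.1 fun h => hne ⟨⟨χ, h⟩⟩
    simp [hbot] at htop
  obtain ⟨ι⟩ := Function.Embedding.nonempty_of_card_le hcard
  have hsurj := Function.invFun_surjective ι.injective
  refine ⟨fun i => F (Function.invFun ι i), fun x c => ⟨fun h => ?_, fun h i => ?_⟩⟩
  · have key : ⊤ ≤ (ρ x).eigenspace c := by
      rw [← htop]
      refine iSup_le fun χ => ?_
      by_cases hχ : p χ = ⊥
      · rw [hχ]; exact bot_le
      · intro v hv
        obtain ⟨i, hi⟩ := hsurj ⟨χ, hχ⟩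
        have hχx : (F (Function.invFun ι i) x : K) = c := h i
        rw [hi, hF] at hχx
        exact Module.End.mem_eigenspace_iff.2 (hχx ▸ hev χ v hv x)
    ext v
    exact Module.End.mem_eigenspace_iff.1 (key Submodule.mem_top)
  · obtain ⟨v, hv, hv0⟩ := Submodule.exists_mem_ne_zero_of_ne_bot (Function.invFun ι i).2
    refine smul_left_injective K hv0 ?_
    simp only [hF]
    rw [← hev _ v hv x, h]
    simp

end LinearAlgebra

section ProjectiveRepresentation

open Module

variable {K V H G : Type*} [Field K] [AddCommGroup V] [Module K V] [Group H] [Group G]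
  {ρ : H →* End K V} {π : H →* G}

theorem MonoidHom.injective_apply_of_end (ρ : H →* End K V) (x : H) :
    Function.Injective (ρ x) := by
  refine Function.LeftInverse.injective (g := ρ x⁻¹) fun v => ?_
  rw [← Module.End.mul_apply, ← map_mul, inv_mul_cancel, map_one, Module.End.one_apply]

theorem eq_iff_exists_eq_smul (hker : ∀ x, π x = 1 ↔ ∃ c : K, ρ x = c • 1) {x y : H} :
    π x = π y ↔ ∃ c : K, ρ x = c • ρ y := by
  rw [← inv_mul_eq_one (a := π y) |>.trans eq_comm, ← map_inv, ← map_mul, hker]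
  refine exists_congr fun c => ⟨fun h => ?_, fun h => ?_⟩
  · calc ρ x = ρ y * ρ (y⁻¹ * x) := by rw [← map_mul, mul_inv_cancel_left]
      _ = c • ρ y := by rw [h, mul_smul_comm, mul_one]
  · rw [map_mul, h, mul_smul_comm, ← map_mul, inv_mul_cancel, map_one]

theorem commute_iff_exists_mul_eq_smul_mul (hker : ∀ x, π x = 1 ↔ ∃ c : K, ρ x = c • 1)
    {x y : H} : π x * π y = π y * π x ↔ ∃ c : K, ρ x * ρ y = c • (ρ y * ρ x) := by
  simpa only [map_mul] using eq_iff_exists_eq_smul hker (x := x * y) (y := y * x)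

theorem generatedByAtMost_two_of_mul_eq_smul_mul [IsAlgClosed K] [FiniteDimensional K V]
    (hV : finrank K V = 3) [Finite G] (hG : IsPGroup 3 G) (hπ : Function.Surjective π)
    (hker : ∀ x, π x = 1 ↔ ∃ c : K, ρ x = c • 1) {h g : H}
    (hh : ∀ x, π x * π h = π h * π x) {ξ : K} (hξ : ξ ≠ 1)
    (hgh : ρ h * ρ g = ξ • (ρ g * ρ h)) : GeneratedByAtMost G 2 := by
  have hinj := ρ.injective_apply_of_end
  obtain ⟨b, μ, hμ, hb, hb1, hb2⟩ :=
    Module.End.exists_basis_of_mul_eq_smul_mul hV (hinj h) (hinj g) hξ hgh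
  have hcube (x y : H) (c : K) (hc : ρ x * ρ y = c • (ρ y * ρ x)) : c ^ 3 = 1 :=
    hV ▸ Module.End.pow_finrank_eq_one_of_mul_eq_smul_mul (hinj x) (hinj y) hc
  have hprim : IsPrimitiveRoot ξ 3 := by
    have := orderOf_eq_prime (hcube _ _ _ hgh) hξ
    exact this ▸ IsPrimitiveRoot.orderOf ξ
  let C : Subgroup H := (Subgroup.centralizer {ρ.toHomUnits h}).comap ρ.toHomUnits
  have hC (x : H) : x ∈ C ↔ Commute (ρ x) (ρ h) := by
    rw [Subgroup.mem_comap, Subgroup.mem_centralizer_singleton_iff, Units.ext_iff]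
    exact Iff.rfl
  have hdiag (x : H) (hx : x ∈ C) (i : Fin 3) : ∃ r : K, ρ x (b i) = r • b i :=
    b.exists_smul_of_commute hμ hb ((hC x).1 hx) i
  have hCcomm (x y : H) (hx : x ∈ C) (hy : y ∈ C) : ρ x * ρ y = ρ y * ρ x := by
    refine b.ext fun i => ?_
    obtain ⟨r, hr⟩ := hdiag x hx i
    obtain ⟨s, hs⟩ := hdiag y hy i
    simp [hr, hs, smul_comm r s]
  have hscalar (x : H) (hx : x ∈ C) (hxg : Commute (ρ x) (ρ g)) : π x = 1 := by
    have hg (v : V) : ρ x (ρ g v) = ρ g (ρ x v) := LinearMap.congr_fun hxg v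
    obtain ⟨r, hr⟩ := hdiag x hx 0
    have h1 : ρ x (b 1) = r • b 1 := by rw [← hb1, hg, hr, map_smul]
    have h2 : ρ x (b 2) = r • b 2 := by rw [← hb2, hg, h1, map_smul]
    refine (hker x).2 ⟨r, b.ext fun i => ?_⟩
    fin_cases i
    · simpa using hr
    · simpa using h1
    · simpa using h2
  have hCg (x : H) : ∃ k : ℤ, g ^ k * x ∈ C := by
    obtain ⟨c, hc⟩ := (commute_iff_exists_mul_eq_smul_mul hker).1 (hh x)
    obtain ⟨k, -, hk⟩ := hprim.eq_pow_of_pow_eq_one (hcube _ _ _ hc)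
    have hpow (n : ℕ) : ρ h * ρ g ^ n = ξ ^ n • (ρ g ^ n * ρ h) := by
      induction n with
      | zero => simp
      | succ n ih =>
        rw [pow_succ, ← mul_assoc, ih, smul_mul_assoc, mul_assoc, hgh, mul_smul_comm, smul_smul,
          pow_succ, mul_assoc]
    refine ⟨k, (hC _).2 ?_⟩
    rw [commute_iff_eq, zpow_natCast, map_mul, map_pow, mul_assoc, hc, ← hk, ← mul_assoc (ρ h),
      hpow, mul_smul_comm, smul_mul_assoc, mul_assoc]
  refine generatedByAtMost_two_of_abelian_of_card_centralizer_le hG (C.map π) ?_ (π g) ?_ ?_ ?_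
  · rintro _ ⟨x, hx, rfl⟩ _ ⟨y, hy, rfl⟩
    exact (commute_iff_exists_mul_eq_smul_mul hker).2 ⟨1, by rw [one_smul, hCcomm x y hx hy]⟩
  · rintro _ ⟨x, hx, rfl⟩
    refine ⟨g * x * g⁻¹, (hC _).2 ?_, by simp⟩
    have hξ0 : ξ ≠ 0 := hprim.ne_zero (by norm_num)
    have h1 : ρ h * ρ g⁻¹ = ξ⁻¹ • (ρ g⁻¹ * ρ h) := by
      rw [eq_inv_smul_iff₀ hξ0]
      calc ξ • (ρ h * ρ g⁻¹) = ρ g⁻¹ * (ξ • (ρ g * ρ h)) * ρ g⁻¹ := by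
            rw [mul_smul_comm, ← mul_assoc, ← map_mul ρ g⁻¹ g, inv_mul_cancel, map_one, one_mul,
              smul_mul_assoc]
        _ = ρ g⁻¹ * ρ h := by
            rw [← hgh, mul_assoc, mul_assoc, ← map_mul ρ g, mul_inv_cancel, map_one, mul_one]
    have h2 := ((hC x).1 hx).eq
    have h3 : ρ g⁻¹ * ρ h = ξ • (ρ h * ρ g⁻¹) := by rw [h1, smul_inv_smul₀ hξ0]
    rw [commute_iff_eq]
    simp only [map_mul]
    calc ρ g * ρ x * ρ g⁻¹ * ρ h = ρ g * (ρ x * (ρ g⁻¹ * ρ h)) := by simp only [mul_assoc]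
      _ = ξ • (ρ g * ((ρ x * ρ h) * ρ g⁻¹)) := by
        rw [h3, mul_smul_comm, mul_smul_comm, mul_assoc]
      _ = (ξ • (ρ g * ρ h)) * (ρ x * ρ g⁻¹) := by rw [h2]; simp only [mul_assoc, smul_mul_assoc]
      _ = ρ h * (ρ g * ρ x * ρ g⁻¹) := by rw [← hgh]; simp only [mul_assoc]
  · intro x
    obtain ⟨x, rfl⟩ := hπ x
    obtain ⟨k, hk⟩ := hCg x
    exact ⟨k, g ^ k * x, hk, by simp⟩
  · have hlift (y : {x : G // x ∈ C.map π ∧ π g * x = x * π g}) :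
        ∃ x ∈ C, π x = y ∧ ∃ c : K, ρ x * ρ g = c • (ρ g * ρ x) := by
      obtain ⟨_, ⟨x, hx, rfl⟩, hy⟩ := y
      exact ⟨x, hx, rfl, (commute_iff_exists_mul_eq_smul_mul hker).1 hy.symm⟩
    choose l hlC hlπ s hs using hlift
    have hs3 y : s y ∈ Polynomial.nthRootsFinset 3 (1 : K) :=
      (Polynomial.mem_nthRootsFinset (by norm_num) 1).2 (hcube _ _ _ (hs y))
    rw [← hprim.card_nthRootsFinset, ← Fintype.card_coe, ← Nat.card_eq_fintype_card]
    refine Nat.card_le_card_of_injective (fun y => ⟨s y, hs3 y⟩) fun y z hyz => Subtype.ext ?_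
    have hsyz : s y = s z := congrArg Subtype.val hyz
    have hs0 : s z ≠ 0 := fun h0 => by simpa [h0] using hcube _ _ _ (hs z)
    rw [← hlπ y, ← hlπ z, ← mul_inv_eq_one, ← map_inv, ← map_mul]
    refine hscalar _ (mul_mem (hlC y) (inv_mem (hlC z))) ?_
    have hmul : ρ (l y * (l z)⁻¹) * ρ (l z) = ρ (l y) := by
      rw [← map_mul, inv_mul_cancel_right]
    have hcancel : ρ (l z) * ρ (l z)⁻¹ = 1 := by rw [← map_mul, mul_inv_cancel, map_one]
    have h1 : s z • (ρ (l y * (l z)⁻¹) * ρ g * ρ (l z)) =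
        s z • (ρ g * ρ (l y * (l z)⁻¹) * ρ (l z)) := by
      rw [mul_assoc, ← mul_smul_comm, ← hs z, ← mul_assoc, hmul, mul_assoc (ρ g), hmul, hs y, hsyz]
    have h2 := congrArg (· * ρ (l z)⁻¹) (smul_right_injective _ hs0 h1)
    simpa only [commute_iff_eq, mul_assoc, hcancel, mul_one] using h2

theorem pow_eq_smul_one_of_finite [Nontrivial V] [Finite G]
    (hker : ∀ x, π x = 1 ↔ ∃ c : K, ρ x = c • 1) {x : H} {n : ℕ} (hn : π x ^ n = 1) :
    ∃ c : K, c ≠ 0 ∧ ρ x ^ n = c • 1 := by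
  obtain ⟨c, hc⟩ := (hker (x ^ n)).1 (by rw [map_pow, hn])
  refine ⟨c, ?_, by rw [← map_pow, hc]⟩
  rintro rfl
  obtain ⟨v, hv⟩ := exists_ne (0 : V)
  exact hv (ρ.injective_apply_of_end (x ^ n) (by rw [hc, zero_smul]; simp))

theorem commute_of_forall_central_commute [IsAlgClosed K] [CharZero K] [FiniteDimensional K V]
    {p : ℕ} [hp : Fact p.Prime] (hV : finrank K V = p) [Finite G] (hG : IsPGroup p G)
    (hπ : Function.Surjective π) (hker : ∀ x, π x = 1 ↔ ∃ c : K, ρ x = c • 1)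
    (hcen : ∀ z, (∀ x, π x * π z = π z * π x) → ∀ x, Commute (ρ z) (ρ x)) (x y : H) :
    Commute (ρ x) (ρ y) := by
  have : Nontrivial V := Module.nontrivial_of_finrank_pos (R := K) (hV ▸ hp.out.pos)
  suffices hcomm : Subgroup.center G = ⊤ from
    hcen x (fun w => Subgroup.mem_center_iff.1 (hcomm ▸ Subgroup.mem_top (π x)) _) y
  by_contra hne
  have := QuotientGroup.nontrivial_iff.2 hne
  have hQ := (hG.to_quotient (Subgroup.center G)).center_nontrivial
  obtain ⟨⟨q, hq⟩, hq1⟩ := exists_ne (1 : Subgroup.center (G ⧸ Subgroup.center G))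
  obtain ⟨a, rfl⟩ := QuotientGroup.mk_surjective q
  obtain ⟨a, rfl⟩ := hπ a
  have ha : π a ∉ Subgroup.center G := fun h =>
    hq1 (Subtype.ext ((QuotientGroup.eq_one_iff _).2 h))
  obtain ⟨x, hx⟩ : ∃ x, π x * π a ≠ π a * π x := by
    by_contra! h
    exact ha (Subgroup.mem_center_iff.2 fun w => by obtain ⟨w, rfl⟩ := hπ w; exact h w)
  let k := a * x * a⁻¹ * x⁻¹
  have hk : π k ∈ Subgroup.center G := by
    rw [← QuotientGroup.eq_one_iff]
    have h := Subgroup.mem_center_iff.1 hq (π x : G ⧸ Subgroup.center G)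
    simp only [k, map_mul, map_inv, QuotientGroup.mk_mul, QuotientGroup.mk_inv]
    rw [← h, mul_inv_cancel_right, mul_inv_cancel]
  have hkρ := hcen k (Subgroup.mem_center_iff.1 hk <| π ·)
  have hax : ρ a * ρ x = ρ k * (ρ x * ρ a) := by
    simp only [← map_mul]
    congr 1
    simp only [k]
    group
  have hT : ∀ c : K, ρ k ≠ c • 1 := fun c hc => by
    have h1 := (hker k).2 ⟨c, hc⟩
    simp only [k, map_mul, map_inv, mul_inv_eq_iff_eq_mul, one_mul] at h1
    exact hx h1.symm
  obtain ⟨m, hm⟩ := hG (π a)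
  obtain ⟨c, hc0, hc⟩ := pow_eq_smul_one_of_finite hker hm
  have hTN : ρ k ^ p ^ m = 1 := by
    have hpow (n : ℕ) : ρ a ^ n * ρ x = ρ k ^ n * (ρ x * ρ a ^ n) := by
      induction n with
      | zero => simp
      | succ n ih =>
        rw [pow_succ', mul_assoc, ih, ← mul_assoc, ← ((hkρ a).pow_left n).eq, mul_assoc,
          ← mul_assoc (ρ a), hax, pow_succ]
        simp only [mul_assoc]
    have h1 := hpow (p ^ m)
    rw [hc, smul_mul_assoc, one_mul, mul_smul_comm, mul_smul_comm, mul_one] at h1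
    have h2 := congrArg (· * ρ x⁻¹) (smul_right_injective _ hc0 h1)
    have hcancel : ρ x * ρ x⁻¹ = 1 := by rw [← map_mul, mul_inv_cancel, map_one]
    simpa only [mul_assoc, hcancel, mul_one] using h2.symm
  obtain ⟨μ, hμ, hμ1⟩ : ∃ μ, (ρ k).HasEigenvalue μ ∧ μ ≠ 1 := by
    by_contra! h
    exact hT 1 (Module.End.eq_smul_one_of_forall_hasEigenvalue
      (Module.End.isFinitelySemisimple_of_pow_eq_smul_one (c := 1)
        (pow_ne_zero m hp.out.ne_zero) one_ne_zero (by rw [hTN, one_smul])) h)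
  have hμN : μ ^ p ^ m = 1 := by
    obtain ⟨v, hv⟩ := hμ.exists_hasEigenvector
    have h1 := hv.pow_apply (p ^ m)
    rw [hTN] at h1
    exact smul_left_injective K hv.2 (by simpa using h1.symm)
  let E := (ρ k).eigenspace μ
  have hmaps (y : H) : ∀ v ∈ E, ρ y v ∈ E := fun v hv =>
    Module.End.mapsTo_genEigenspace_of_comm (hkρ y) μ 1 hv
  have hinj (y : H) : Function.Injective ((ρ y).restrict (hmaps y)) := fun u v huv =>
    Subtype.ext (ρ.injective_apply_of_end y (congrArg Subtype.val huv))
  have hμd : μ ^ finrank K E = 1 :=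
    Module.End.pow_finrank_eq_one_of_mul_eq_smul_mul (hinj a) (hinj x) <| by
      ext v
      have h1 := LinearMap.congr_fun hax v
      exact h1.trans (Module.End.mem_eigenspace_iff.1 (hmaps x _ (hmaps a _ v.2)))
  have hd : finrank K E < p := by
    refine lt_of_le_of_ne (hV ▸ Submodule.finrank_le E) fun h => hT μ ?_
    have hE : E = ⊤ := Submodule.eq_top_of_finrank_eq (h.trans hV.symm)
    ext v
    exact Module.End.mem_eigenspace_iff.1 (hE ▸ Submodule.mem_top : v ∈ E)
  have hd0 : 0 < finrank K E := by
    have : Nontrivial E := (Submodule.nontrivial_iff_ne_bot).2 hμ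
    exact Module.finrank_pos
  have hcop : (finrank K E).Coprime (p ^ m) :=
    (Nat.coprime_of_lt_prime hd0.ne' hd hp.out).symm.pow_right m
  exact hμ1 (by simpa [hcop.gcd_eq_one] using pow_gcd_eq_one.2 ⟨hμd, hμN⟩)

theorem generatedByAtMost_two_of_commute [IsAlgClosed K] [CharZero K] [FiniteDimensional K V]
    (hV : finrank K V = 3) [Finite G] (hπ : Function.Surjective π)
    (hker : ∀ x, π x = 1 ↔ ∃ c : K, ρ x = c • 1) (hcomm : ∀ x y, Commute (ρ x) (ρ y)) :
    GeneratedByAtMost G 2 := by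
  have : Nontrivial V := Module.nontrivial_of_finrank_pos (R := K) (by omega)
  obtain ⟨e, he⟩ := ρ.exists_joint_eigencharacters hV (by norm_num) hcomm fun x => by
    obtain ⟨c, hc0, hc⟩ := pow_eq_smul_one_of_finite hker (pow_card_eq_one' (x := π x))
    exact Module.End.isFinitelySemisimple_of_pow_eq_smul_one Nat.card_pos.ne' hc0 hc
  have hle (i : Fin 3) : π.ker ≤ (e i / e 2).ker := fun x hx => by
    obtain ⟨c, hc⟩ := (hker x).1 hx
    have h1 := (he x c).2 hc
    rw [MonoidHom.mem_ker, MonoidHom.div_apply, div_eq_one, Units.ext_iff, h1, h1]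
  let f (i : Fin 3) : G →* Kˣ := π.liftOfSurjective hπ ⟨e i / e 2, hle i⟩
  have hf (i : Fin 3) (x : H) : f i (π x) = e i x / e 2 x :=
    π.liftOfRightInverse_comp_apply _ _ ⟨e i / e 2, hle i⟩ x
  refine generatedByAtMost_two_of_hom_units (f 0) (f 1) fun x h0 h1 => ?_
  obtain ⟨x, rfl⟩ := hπ x
  rw [hf, div_eq_one] at h0 h1
  refine (hker x).2 ⟨e 2 x, (he x _).1 fun i => ?_⟩
  fin_cases i
  · exact congrArg Units.val h0
  · exact congrArg Units.val h1
  · rfl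

theorem generatedByAtMost_two_of_isPGroup_three [IsAlgClosed K] [CharZero K]
    [FiniteDimensional K V] (hV : finrank K V = 3) [Finite G] (hG : IsPGroup 3 G)
    (hπ : Function.Surjective π) (hker : ∀ x, π x = 1 ↔ ∃ c : K, ρ x = c • 1) :
    GeneratedByAtMost G 2 := by
  by_cases hcen : ∀ z, (∀ x, π x * π z = π z * π x) → ∀ x, Commute (ρ z) (ρ x)
  · exact generatedByAtMost_two_of_commute hV hπ hker
      (commute_of_forall_central_commute hV hG hπ hker hcen)
  · push Not at hcen
    obtain ⟨h, hh, g, hg⟩ := hcen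
    obtain ⟨ξ, hξ⟩ := (commute_iff_exists_mul_eq_smul_mul hker).1 (hh g).symm
    refine generatedByAtMost_two_of_mul_eq_smul_mul hV hG hπ hker hh (ξ := ξ) ?_ hξ
    rintro rfl
    exact hg (by rw [commute_iff_eq, hξ, one_smul])

end ProjectiveRepresentation

theorem stmt_6 (G : Subgroup (GL (Fin 3) ℂ ⧸ Subgroup.center (GL (Fin 3) ℂ))) [Finite G]
    (hG : IsPGroup 3 G) : GeneratedByAtMost G 2 := by
  let q := QuotientGroup.mk' (Subgroup.center (GL (Fin 3) ℂ))
  let ρ : GL (Fin 3) ℂ →* Module.End ℂ (Fin 3 → ℂ) :=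
    (Matrix.toLinAlgEquiv' (R := ℂ) (n := Fin 3) : _ →* _).comp
      (Units.coeHom (Matrix (Fin 3) (Fin 3) ℂ))
  refine generatedByAtMost_two_of_isPGroup_three (K := ℂ) (V := Fin 3 → ℂ)
    (ρ := ρ.comp (G.comap q).subtype) (π := q.subgroupComap G) (by simp) hG ?_ ?_
  · rintro ⟨x, hx⟩
    obtain ⟨y, rfl⟩ := QuotientGroup.mk'_surjective _ x
    exact ⟨⟨y, hx⟩, rfl⟩
  · rintro ⟨x, hx⟩
    rw [Subtype.ext_iff]
    refine (QuotientGroup.eq_one_iff x).trans ?_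
    rw [Matrix.GeneralLinearGroup.mem_center_iff_val_mem_range_scalar]
    refine exists_congr fun c => ?_
    have h1 : c • (1 : Module.End ℂ (Fin 3 → ℂ)) =
        Matrix.toLinAlgEquiv' (R := ℂ) (n := Fin 3) (Matrix.scalar (Fin 3) c) := by
      rw [Matrix.scalar_apply, ← Matrix.smul_one_eq_diagonal, map_smul, map_one]
    rw [h1]
    exact eq_comm.trans (Matrix.toLinAlgEquiv' (R := ℂ) (n := Fin 3)).injective.eq_iff.symm
end

section
/- Every finite 3-subgroup of GL₃(ℂ) can be generated by 3 elements. -/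
open Matrix

/-- A finite group that embeds into `n` copies of the unit group of a domain can be generated
by `n` elements. -/
lemma generatedByAtMost_of_units_characters {R : Type*} [CommRing R] [IsDomain R] {n : ℕ} :
    ∀ {A : Type*} [Group A] [Finite A] (f : Fin n → A →* Rˣ),
      (∀ a, (∀ i, f i a = 1) → a = 1) → GeneratedByAtMost A n := by
  induction n with
  | zero =>
    intro A _ _ f hf
    refine ⟨∅, by simp, ?_⟩
    rw [eq_top_iff]
    intro a _
    rw [hf a fun i => i.elim0]
    exact one_mem _
  | succ n ih =>
    intro A _ _ f hf
    classical
    obtain ⟨S, hS, hStop⟩ := ih (A := (f 0).ker) (fun i => (f i.succ).comp (f 0).ker.subtype) (by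
      rintro ⟨a, ha⟩ h
      exact Subtype.ext (hf a (Fin.cases ha h)))
    have : Finite (f 0).range := Set.finite_range (f 0)
    obtain ⟨⟨_, a, rfl⟩, ha⟩ := IsCyclic.exists_generator (α := (f 0).range)
    refine ⟨insert a (S.map (Function.Embedding.subtype _)), ?_, ?_⟩
    · grw [Finset.card_insert_le, Finset.card_map, hS]
    · rw [eq_top_iff]
      intro g _
      obtain ⟨k, hk⟩ := ha ⟨f 0 g, g, rfl⟩
      have hk : f 0 a ^ k = f 0 g := congrArg Subtype.val hk
      have hmem : a ^ (-k) * g ∈ (Subgroup.closure (S : Set (f 0).ker)).map (f 0).ker.subtype := by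
        rw [hStop]
        refine ⟨⟨a ^ (-k) * g, ?_⟩, trivial, rfl⟩
        simp [MonoidHom.mem_ker, ← hk]
      rw [MonoidHom.map_closure] at hmem
      rw [← inv_mul_cancel_left (a ^ (-k)) g]
      refine mul_mem ?_ (Subgroup.closure_mono ?_ hmem)
      · exact inv_mem (zpow_mem (Subgroup.subset_closure (by simp)) _)
      · simp

/-- Let `σ` be an automorphism with `σ ^ 3 = 1` of a finite abelian group `A`, whose group of fixed
points is cyclic. Then two elements generate `A` modulo the elements `σ a / a`. -/
lemma exists_pair_generating_coinvariants {A : Type*} [CommGroup A] [Finite A] (σ : A →* A)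
    (hσ : ∀ a, σ (σ (σ a)) = a) (Z : Subgroup A) (hZ : ∀ a, a ∈ Z ↔ σ a = a) [IsCyclic Z] :
    ∃ a k : A, ∀ M : Subgroup A, a ∈ M → k ∈ M → (∀ b, σ b / b ∈ M) → M = ⊤ := by
  let δ : A →* A := σ / MonoidHom.id A
  let N : A →* A := MonoidHom.id A * σ * σ.comp σ
  have hδ (b : A) : δ b = σ b / b := rfl
  have hN (b : A) : N b = b * σ b * σ (σ b) := rfl
  have hker : δ.ker = Z := by
    ext b
    rw [MonoidHom.mem_ker, hδ, div_eq_one, hZ]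
  have hNZ : N.range ≤ Z := by
    rintro _ ⟨b, rfl⟩
    rw [hZ, hN, map_mul, map_mul, hσ, mul_comm, mul_assoc]
  have hRK : δ.range ≤ N.ker := by
    rintro _ ⟨b, rfl⟩
    rw [MonoidHom.mem_ker, hN, hδ]
    simp only [map_div, hσ]
    simp [mul_comm]
  have hcube : (powMonoidHom 3 : Z →* Z).range.map Z.subtype ≤ N.range := by
    rintro _ ⟨_, ⟨b, rfl⟩, rfl⟩
    refine ⟨b, ?_⟩
    simp [hN, (hZ b).1 b.2, pow_succ]
  have hdvd : δ.range.relIndex N.ker ∣ 3 := by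
    have h1 : Nat.card N.ker * Nat.card N.range = Nat.card Z * Nat.card δ.range := by
      rw [← Subgroup.index_ker, ← Subgroup.index_ker, Subgroup.card_mul_index, ← hker,
        Subgroup.card_mul_index]
    have h2 : Nat.card Z ∣ 3 * Nat.card N.range := by
      rw [← Subgroup.index_mul_card (powMonoidHom 3 : Z →* Z).range,
        IsCyclic.index_powMonoidHom_range]
      refine mul_dvd_mul (Nat.gcd_dvd_right _ _) ?_
      rw [← Subgroup.card_map_of_injective Z.subtype_injective]
      exact Subgroup.card_dvd_of_le hcube
    have h3 : δ.range.relIndex N.ker * Nat.card δ.range = Nat.card N.ker := by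
      rw [mul_comm, ← Subgroup.relIndex_bot_left, ← Subgroup.relIndex_bot_left,
        Subgroup.relIndex_mul_relIndex _ _ _ bot_le hRK]
    have h4 : 0 < Nat.card δ.range * Nat.card N.range := Nat.mul_pos Nat.card_pos Nat.card_pos
    refine Nat.dvd_of_mul_dvd_mul_right h4 ?_
    rw [← mul_assoc, h3, h1, mul_comm (Nat.card Z), mul_left_comm]
    exact mul_dvd_mul_left _ h2
  obtain ⟨k, hk⟩ : ∃ k : A, ∀ M : Subgroup A, k ∈ M → δ.range ≤ M → N.ker ≤ M := by
    by_cases h : N.ker ≤ δ.range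
    · exact ⟨1, fun M _ hM => h.trans hM⟩
    · obtain ⟨k, hkK, hkR⟩ := SetLike.not_le_iff_exists.1 h
      refine ⟨k, fun M hkM hM => ?_⟩
      let L := Subgroup.zpowers k ⊔ δ.range
      have hLK : L ≤ N.ker := sup_le (by simpa using hkK) hRK
      have hmul := Subgroup.relIndex_mul_relIndex _ _ _ (le_sup_right : δ.range ≤ L) hLK
      have hne : δ.range.relIndex L ≠ 1 := by
        rw [Ne, Subgroup.relIndex_eq_one]
        exact fun h => hkR (h (Subgroup.mem_sup_left (Subgroup.mem_zpowers k)))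
      have h3 : δ.range.relIndex L = 3 :=
        ((Nat.dvd_prime Nat.prime_three).1 ((Dvd.intro _ hmul).trans hdvd)).resolve_left hne
      have h1 : L.relIndex N.ker = 1 := by
        rw [← hmul, h3] at hdvd
        exact Nat.dvd_one.1 (Nat.dvd_of_mul_dvd_mul_left three_pos hdvd)
      rw [Subgroup.relIndex_eq_one] at h1
      exact h1.trans (sup_le (by simpa using hkM) hM)
  have : IsCyclic N.range := isCyclic_of_injective _ (Subgroup.inclusion_injective hNZ)
  obtain ⟨⟨_, a, rfl⟩, ha⟩ := IsCyclic.exists_generator (α := N.range)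
  refine ⟨a, k, fun M haM hkM hM => ?_⟩
  have hKM := hk M hkM (by rintro _ ⟨b, rfl⟩; exact hM b)
  rw [eq_top_iff]
  intro g _
  obtain ⟨j, hj⟩ := ha ⟨N g, g, rfl⟩
  have hj : N a ^ j = N g := congrArg Subtype.val hj
  rw [← inv_mul_cancel_left (a ^ (-j)) g]
  refine mul_mem (inv_mem (zpow_mem haM (-j))) (hKM ?_)
  simp [MonoidHom.mem_ker, ← hj]

/-- A finite `3`-group `G` with an abelian subgroup `A` normalized by `g`, such that `g ^ 3 ∈ A`,
`G` is generated by `A` and `g`, and the centralizer of `g` in `A` is cyclic, can be generated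
by three elements. -/
lemma generatedByAtMost_three_of_abelian_subgroup {G : Type*} [Group G] [Finite G]
    (hG : IsPGroup 3 G) (A : Subgroup G) [IsMulCommutative A] (g : G)
    (hconj : ∀ a ∈ A, g * a * g⁻¹ ∈ A) (hg3 : g ^ 3 ∈ A)
    (hgen : ∀ M : Subgroup G, A ≤ M → g ∈ M → M = ⊤)
    [IsCyclic ((Subgroup.centralizer {g}).subgroupOf A)] : GeneratedByAtMost G 3 := by
  classical
  have := Fact.mk Nat.prime_three
  have := hG.isNilpotent
  let _ : CommGroup A := IsMulCommutative.instCommGroup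
  let σ : A →* A := ((MulAut.conj g).toMonoidHom.comp A.subtype).codRestrict A
    fun a => hconj a a.2
  have hσ (a : A) : ((σ a : A) : G) = g * a * g⁻¹ := rfl
  obtain ⟨a, k, hak⟩ := exists_pair_generating_coinvariants σ
    (fun a => Subtype.ext (by
      have h : g ^ 3 * (a : G) = a * g ^ 3 :=
        congrArg Subtype.val (mul_comm (⟨g ^ 3, hg3⟩ : A) a)
      calc g * (g * (g * a * g⁻¹) * g⁻¹) * g⁻¹ = (g ^ 3 * a) * (g ^ 3)⁻¹ := by simp [pow_succ, mul_assoc]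
        _ = a := by rw [h, mul_inv_cancel_right]))
    ((Subgroup.centralizer {g}).subgroupOf A)
    (fun a => by
      rw [Subgroup.mem_subgroupOf, Subgroup.mem_centralizer_singleton_iff, ← Subtype.coe_inj, hσ,
        mul_inv_eq_iff_eq_mul]
      exact eq_comm)
  refine ⟨{g, (a : G), (k : G)}, Finset.card_le_three, ?_⟩
  by_contra hne
  obtain ⟨M, hM, hle⟩ := (eq_top_or_exists_le_coatom _).resolve_left hne
  have hMn : M.Normal :=
    Subgroup.NormalizerCondition.normal_of_coatom M Group.normalizerCondition_of_isNilpotent hM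
  have hmem (x : G) (hx : x ∈ ({g, (a : G), (k : G)} : Finset G)) : x ∈ M :=
    hle (Subgroup.subset_closure hx)
  have hgM : g ∈ M := hmem g (by simp)
  have hAM : M.subgroupOf A = ⊤ := hak _ (hmem a (by simp)) (hmem k (by simp)) fun b => by
    rw [Subgroup.mem_subgroupOf, div_eq_mul_inv, Subgroup.coe_mul, hσ, Subgroup.coe_inv, mul_assoc,
      mul_assoc]
    refine mul_mem hgM ?_
    rw [← mul_assoc]
    exact hMn.conj_mem _ (inv_mem hgM) b
  exact hM.1 (hgen M (Subgroup.subgroupOf_eq_top.1 hAM) hgM)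

section LinearAlgebra

open Module

variable {K V : Type*} [Field K] [AddCommGroup V] [Module K V]

/-- Commuting endomorphisms of finite order are simultaneously diagonalizable. -/
lemma exists_basis_of_commute_of_pow_eq_one [IsAlgClosed K] [CharZero K] [FiniteDimensional K V]
    {ι : Type*} (f : ι → End K V) (hcomm : ∀ i j, Commute (f i) (f j)) {n : ℕ} (hn : n ≠ 0)
    (hf : ∀ i, f i ^ n = 1) :
    ∃ (b : Basis (Fin (finrank K V)) K V) (χ : Fin (finrank K V) → ι → K),
      ∀ i j, f i (b j) = χ j i • b j := by
  have hss (i : ι) : (f i).IsFinitelySemisimple := by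
    rw [End.isFinitelySemisimple_iff_isSemisimple]
    refine End.isSemisimple_of_squarefree_aeval_eq_zero (p := Polynomial.X ^ n - Polynomial.C 1)
      (Polynomial.separable_X_pow_sub_C 1 (Nat.cast_ne_zero.2 hn) one_ne_zero).squarefree ?_
    simp [hf]
  have htop := End.iSup_iInf_maxGenEigenspace_eq_top_of_iSup_maxGenEigenspace_eq_top_of_commute f
    (fun i j _ => hcomm i j) (fun i => End.iSup_maxGenEigenspace_eq_top _)
  simp only [(hss _).maxGenEigenspace_eq_eigenspace] at htop
  let s : Set V := {v | ∃ χ : ι → K, ∀ i, f i v = χ i • v}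
  have hs : ⊤ ≤ Submodule.span K s := by
    rw [← htop]
    refine iSup_le fun χ v hv => Submodule.subset_span ⟨χ, fun i => ?_⟩
    exact End.mem_eigenspace_iff.1 ((Submodule.mem_iInf _).1 hv i)
  let b := Basis.ofSpan hs
  have hb (j) : b j ∈ s := Basis.ofSpan_subset hs ⟨j, rfl⟩
  have := FiniteDimensional.fintypeBasisIndex b
  let e := Fintype.equivFinOfCardEq (finrank_eq_card_basis b).symm
  choose χ hχ using fun j => hb (e.symm j)
  exact ⟨b.reindex e, χ, fun i j => by simpa using hχ j i⟩

/-- An endomorphism commuting with one that is diagonal with distinct eigenvalues is diagonal. -/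
lemma exists_smul_of_commute_of_injective {ι : Type*} (b : Basis ι K V) {T S : End K V}
    {c : ι → K} (hc : Function.Injective c) (hT : ∀ i, T (b i) = c i • b i) (h : Commute T S) :
    ∀ i, ∃ d : K, S (b i) = d • b i := by
  intro i
  refine ⟨b.repr (S (b i)) i, b.repr.injective (Finsupp.ext fun j => ?_)⟩
  have hrepr (v : V) : b.repr (T v) j = c j * b.repr v j := by
    have : b.coord j ∘ₗ T = c j • b.coord j := b.ext fun k => by
      by_cases hkj : k = j <;> simp [hT, hkj]
    simpa using LinearMap.congr_fun this v
  by_cases hij : i = j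
  · simp [hij]
  · have h1 : T (S (b i)) = S (T (b i)) := LinearMap.congr_fun h.eq (b i)
    have h2 := hrepr (S (b i))
    rw [h1, hT, map_smul, map_smul, Finsupp.smul_apply, smul_eq_mul] at h2
    have h3 : b.repr (S (b i)) j = 0 :=
      (mul_eq_mul_right_iff.1 h2).resolve_left (fun h => hij (hc h))
    simp [h3, hij]

/-- Endomorphisms commuting with one that is diagonal with distinct eigenvalues commute. -/
lemma commute_of_commute_of_injective {ι : Type*} (b : Basis ι K V) {T S S' : End K V}
    {c : ι → K} (hc : Function.Injective c) (hT : ∀ i, T (b i) = c i • b i) (h : Commute T S)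
    (h' : Commute T S') : Commute S S' := b.ext fun i => by
  obtain ⟨d, hd⟩ := exists_smul_of_commute_of_injective b hc hT h i
  obtain ⟨d', hd'⟩ := exists_smul_of_commute_of_injective b hc hT h' i
  simp [hd, hd', smul_smul, mul_comm]

variable {G : Type*} [Group G]

/-- A finite group that acts faithfully by scalars is cyclic. -/
lemma isCyclic_of_forall_eq_algebraMap [Nontrivial V] [Finite G] (ρ : G →* End K V)
    (hρ : Function.Injective ρ) (h : ∀ g, ∃ c : K, ρ g = algebraMap K (End K V) c) :
    IsCyclic G := by
  choose c hc using h
  have hinj := (algebraMap K (End K V)).injective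
  let χ : G →* K :=
    { toFun := c
      map_one' := hinj (by rw [← hc, map_one, map_one])
      map_mul' := fun a b => hinj (by rw [← hc, map_mul, map_mul, ← hc, ← hc]) }
  refine isCyclic_of_injective_ringHom χ fun a b hab => hρ ?_
  rw [hc, hc]
  exact congrArg _ hab

/-- A finite abelian group with a faithful representation of dimension `n` can be generated by
`n` elements. -/
lemma generatedByAtMost_finrank_of_commute [IsAlgClosed K] [CharZero K] [FiniteDimensional K V]
    [Finite G] (ρ : G →* End K V) (hρ : Function.Injective ρ) (hcomm : ∀ a b : G, Commute a b) :
    GeneratedByAtMost G (finrank K V) := by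
  obtain ⟨b, χ, hχ⟩ := exists_basis_of_commute_of_pow_eq_one ρ (fun i j => (hcomm i j).map ρ)
    (Nat.card_pos (α := G)).ne' (fun g => by rw [← map_pow, pow_card_eq_one', map_one])
  have hinj (j) : Function.Injective fun c : K => c • b j := smul_left_injective K (b.ne_zero j)
  let ψ (j : Fin (finrank K V)) : G →* K :=
    { toFun := χ j
      map_one' := hinj j (by simp [← hχ])
      map_mul' := fun g h => hinj j (by simp [← hχ, mul_smul, ← map_smul, mul_comm (χ j g)]) }
  refine generatedByAtMost_of_units_characters (fun j => (ψ j).toHomUnits) fun g hg => hρ ?_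
  refine b.ext fun j => ?_
  have hone : χ j g = 1 := congrArg Units.val (hg j)
  simp [hχ, hone]

end LinearAlgebra

/-- A noncommutative finite `p`-group contains a noncentral element `x` with `x ^ p` and all
commutators `⁅g, x⁆` central. -/
lemma exists_notMem_center_of_not_commute {p : ℕ} [Fact p.Prime] {G : Type*} [Group G] [Finite G]
    (hG : IsPGroup p G) (hcomm : ¬ ∀ a b : G, Commute a b) :
    ∃ x ∉ Subgroup.center G, x ^ p ∈ Subgroup.center G ∧
      ∀ g, g * x * g⁻¹ * x⁻¹ ∈ Subgroup.center G := by
  have hQ : IsPGroup p (G ⧸ Subgroup.center G) := hG.to_quotient _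
  have hnt : Nontrivial (G ⧸ Subgroup.center G) := by
    rw [QuotientGroup.nontrivial_iff]
    intro h
    refine hcomm fun a b => ?_
    have hb : b ∈ Subgroup.center G := h ▸ Subgroup.mem_top b
    exact Subgroup.mem_center_iff.1 hb a
  have := hQ.center_nontrivial
  have hC := hQ.to_subgroup (Subgroup.center (G ⧸ Subgroup.center G))
  obtain ⟨q, hq⟩ := exists_prime_orderOf_dvd_card'
    (G := Subgroup.center (G ⧸ Subgroup.center G)) p
    (hC.card_eq_or_dvd.resolve_left Finite.one_lt_card.ne')
  obtain ⟨x, hx⟩ := QuotientGroup.mk_surjective (q : G ⧸ Subgroup.center G)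
  refine ⟨x, fun h => ?_, ?_, fun g => ?_⟩
  · rw [← QuotientGroup.eq_one_iff, hx, OneMemClass.coe_eq_one] at h
    rw [h, orderOf_one] at hq
    exact (Fact.out : p.Prime).ne_one hq.symm
  · rw [← QuotientGroup.eq_one_iff, QuotientGroup.mk_pow, hx, ← Subgroup.coe_pow, ← hq,
      pow_orderOf_eq_one, Subgroup.coe_one]
  · rw [← QuotientGroup.eq_one_iff, QuotientGroup.mk_mul, QuotientGroup.mk_mul,
      QuotientGroup.mk_mul, QuotientGroup.mk_inv, QuotientGroup.mk_inv, hx,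
      Subgroup.mem_center_iff.1 q.2 g, mul_inv_cancel_right, mul_inv_cancel]

section Nonabelian

open Module

variable {K V : Type*} [Field K] [IsAlgClosed K] [CharZero K] [AddCommGroup V] [Module K V]
  {G : Type*} [Group G]

/-- A central element of order dividing `3` and determinant `1` of a nonabelian linear group of
degree `3` is a scalar cube root of unity. -/
lemma exists_eq_algebraMap_of_mem_center (hV : finrank K V = 3) (ρ : G →* End K V)
    (hρ : Function.Injective ρ) (hcomm : ¬ ∀ a b : G, Commute a b) {z : G}
    (hz : z ∈ Subgroup.center G) (hz3 : z ^ 3 = 1) (hdet : LinearMap.det (ρ z) = 1) :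
    ∃ c : K, c ^ 3 = 1 ∧ ρ z = algebraMap K (End K V) c := by
  have : FiniteDimensional K V := FiniteDimensional.of_finrank_pos (by lia)
  have hz3' : ρ z ^ 3 = 1 := by rw [← map_pow, hz3, map_one]
  obtain ⟨b', χ', hχ'⟩ := exists_basis_of_commute_of_pow_eq_one (fun _ : Unit => ρ z)
    (fun _ _ => Commute.refl _) three_ne_zero (fun _ => hz3')
  let b := b'.reindex (finCongr hV)
  let χ (i : Fin 3) : K := χ' ((finCongr hV).symm i) ()
  have hχ (i) : ρ z (b i) = χ i • b i := by simpa [b, χ] using hχ' () _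
  have hχ3 (i) : χ i ^ 3 = 1 := smul_left_injective K (b.ne_zero i) <| by
    have h := LinearMap.congr_fun hz3' (b i)
    simpa [pow_succ, hχ, smul_smul, mul_assoc] using h
  have hprod : χ 0 * χ 1 * χ 2 = 1 := by
    have hdiag : LinearMap.toMatrix b b (ρ z) = Matrix.diagonal χ := by
      ext i j
      by_cases hij : i = j <;>
        simp [LinearMap.toMatrix_apply, hχ, hij]
    rw [← hdet, ← LinearMap.det_toMatrix b, hdiag, Matrix.det_diagonal, Fin.prod_univ_three]
  have hthird {u v w : K} (hu : u ^ 3 = 1) (huv : u = v) (h : u * v * w = 1) : w = u := by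
    subst huv
    linear_combination (-w) * hu + u * h
  have hninj : ¬ Function.Injective χ := fun hinj => hcomm fun g h => by
    have hcen (g : G) : Commute (ρ z) (ρ g) :=
      (show Commute z g from (Subgroup.mem_center_iff.1 hz g).symm).map ρ
    have := (commute_of_commute_of_injective b hinj hχ (hcen g) (hcen h)).eq
    rw [← map_mul, ← map_mul] at this
    exact hρ this
  have heq (i : Fin 3) : χ i = χ 0 := by
    have h01 (h : χ 0 = χ 1) : χ 2 = χ 0 := hthird (hχ3 0) h hprod
    have h02 (h : χ 0 = χ 2) : χ 1 = χ 0 := hthird (hχ3 0) h (by rw [mul_right_comm, hprod])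
    have h12 (h : χ 1 = χ 2) : χ 0 = χ 1 := hthird (hχ3 1) h (by rw [mul_comm, ← mul_assoc, hprod])
    simp only [Function.Injective, Fin.forall_fin_succ] at hninj
    fin_cases i <;> grind
  refine ⟨χ 0, hχ3 0, b.ext fun i => ?_⟩
  rw [hχ, heq, Module.algebraMap_end_apply]

/-- A finite `3`-group with a faithful representation of dimension `3` can be generated by three
elements. -/
lemma generatedByAtMost_three_of_finrank_eq_three [Finite G] (hG : IsPGroup 3 G)
    (hV : finrank K V = 3) (ρ : G →* End K V) (hρ : Function.Injective ρ) :
    GeneratedByAtMost G 3 := by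
  have := Fact.mk Nat.prime_three
  have : FiniteDimensional K V := FiniteDimensional.of_finrank_pos (by lia)
  have : Nontrivial V := nontrivial_of_finrank_pos (R := K) (by lia)
  by_cases hcomm : ∀ a b : G, Commute a b
  · exact hV ▸ generatedByAtMost_finrank_of_commute ρ hρ hcomm
  obtain ⟨x, hx, hx3, hcen⟩ := exists_notMem_center_of_not_commute hG hcomm
  have hcomm_z (g h : G) : Commute (g * x * g⁻¹ * x⁻¹) h :=
    (Subgroup.mem_center_iff.1 (hcen g) h).symm
  have hconj_x (g : G) : g * x * g⁻¹ = (g * x * g⁻¹ * x⁻¹) * x := by rw [inv_mul_cancel_right]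
  have hz3 (g : G) : (g * x * g⁻¹ * x⁻¹) ^ 3 = 1 := by
    have h := congrArg (· ^ 3) (hconj_x g)
    simp only [(hcomm_z g x).mul_pow, conj_pow] at h
    rwa [Subgroup.mem_center_iff.1 hx3 g, mul_inv_cancel_right, eq_comm, mul_eq_right] at h
  have hscalar (g : G) : ∃ c : K, c ^ 3 = 1 ∧
      ρ (g * x * g⁻¹ * x⁻¹) = algebraMap K (End K V) c := by
    refine exists_eq_algebraMap_of_mem_center hV ρ hρ hcomm (hcen g) (hz3 g) ?_
    let d : G →* Kˣ := (LinearMap.det.comp ρ).toHomUnits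
    have : d (g * x * g⁻¹ * x⁻¹) = 1 := by
      rw [map_mul, map_mul, map_mul, map_inv, map_inv, mul_comm (d g), mul_inv_cancel_right,
        mul_inv_cancel]
    exact congrArg Units.val this
  obtain ⟨g, hg⟩ : ∃ g, g * x * g⁻¹ * x⁻¹ ≠ 1 := by
    by_contra! h
    refine hx (Subgroup.mem_center_iff.2 fun g => ?_)
    have := h g
    rwa [mul_inv_eq_one, mul_inv_eq_iff_eq_mul] at this
  have hgx := hconj_x g
  have hzc := hcomm_z g
  obtain ⟨ω, hω3, hρz⟩ := hscalar g
  generalize g * x * g⁻¹ * x⁻¹ = z at hg hgx hzc hρz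
  have hpow (i : ℕ) : g ^ i * x * (g ^ i)⁻¹ = z ^ i * x := by
    induction i with
    | zero => simp
    | succ i ih =>
      calc g ^ (i + 1) * x * (g ^ (i + 1))⁻¹ = g * (g ^ i * x * (g ^ i)⁻¹) * g⁻¹ := by
            simp [pow_succ', mul_assoc]
        _ = z ^ i * (g * x * g⁻¹) := by
            rw [ih, ← mul_assoc, ← ((hzc g).pow_left i).eq]; simp only [mul_assoc]
        _ = z ^ (i + 1) * x := by rw [hgx, pow_succ, mul_assoc]
  have hω : ω ≠ 1 := by
    rintro rfl
    exact hg (hρ (by rw [hρz, map_one, map_one]))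
  have hprim : IsPrimitiveRoot ω 3 := orderOf_eq_prime hω3 hω ▸ IsPrimitiveRoot.orderOf ω
  have hprim2 : IsPrimitiveRoot (ω ^ 2) 3 := hprim.pow_of_coprime 2 (by norm_num)
  obtain ⟨l, hl⟩ := End.exists_eigenvalue (ρ x)
  obtain ⟨v, hv⟩ := hl.exists_hasEigenvector
  have hker (h : G) (w : V) (hw : ρ h w = 0) : w = 0 := by
    have : (ρ h⁻¹ * ρ h) w = 0 := by simp [hw]
    simpa [← map_mul] using this
  have hl0 : l ≠ 0 := by
    rintro rfl
    exact hv.2 (hker x v (by simp [hv.apply_eq_smul]))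
  have heig (i : Fin 3) : (ρ x).HasEigenvector ((ω ^ 2) ^ (i : ℕ) * l) (ρ (g ^ (i : ℕ)) v) := by
    refine ⟨End.mem_eigenspace_iff.2 ?_, fun h => hv.2 (hker _ v h)⟩
    have h1 : ρ (g ^ (i : ℕ)) (ρ x v) = ω ^ (i : ℕ) • ρ x (ρ (g ^ (i : ℕ)) v) := by
      have h := congrArg (fun y => ρ y v) (mul_inv_eq_iff_eq_mul.1 (hpow i))
      simpa only [map_mul, map_pow ρ z, hρz, ← map_pow (algebraMap K (End K V)), End.mul_apply,
        Module.algebraMap_end_apply] using h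
    rw [hv.apply_eq_smul, map_smul] at h1
    rw [mul_smul, h1, smul_smul, ← mul_pow, ← pow_succ, hω3, one_pow, one_smul]
  have hinj : Function.Injective fun i : Fin 3 => (ω ^ 2) ^ (i : ℕ) * l := fun i j hij =>
    Fin.ext (hprim2.pow_inj i.2 j.2 (mul_right_cancel₀ hl0 hij))
  let b := basisOfLinearIndependentOfCardEqFinrank
    (End.eigenvectors_linearIndependent' (ρ x) _ hinj _ heig) (by simp [hV])
  have hb (i) : b i = ρ (g ^ (i : ℕ)) v := by simp [b]
  have hxb (i) : ρ x (b i) = ((ω ^ 2) ^ (i : ℕ) * l) • b i := by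
    rw [hb, (heig i).apply_eq_smul]
  have hmem (a : G) : a ∈ Subgroup.centralizer {x} ↔ Commute x a :=
    Subgroup.mem_centralizer_singleton_iff.trans eq_comm
  have : IsMulCommutative (Subgroup.centralizer {x}) := ⟨⟨fun a a' => Subtype.ext (hρ (by
    simpa using (commute_of_commute_of_injective b hinj hxb
      (((hmem a).1 a.2).map ρ) (((hmem a').1 a'.2).map ρ)).eq))⟩⟩
  have : IsCyclic ((Subgroup.centralizer {g}).subgroupOf (Subgroup.centralizer {x})) := by
    refine isCyclic_of_forall_eq_algebraMap
      ((ρ.comp (Subgroup.subtype _)).comp (Subgroup.subtype _))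
      (hρ.comp ((Subgroup.subtype_injective _).comp (Subgroup.subtype_injective _))) ?_
    rintro ⟨⟨a, hax⟩, hag⟩
    obtain ⟨c, hc⟩ := exists_smul_of_commute_of_injective b hinj hxb (((hmem a).1 hax).map ρ) 0
    refine ⟨c, b.ext fun i => ?_⟩
    have hga : Commute a (g ^ (i : ℕ)) :=
      Commute.pow_right (Subgroup.mem_centralizer_singleton_iff.1 hag) _
    have h := LinearMap.congr_fun (hga.map ρ).eq v
    simp only [hb, Fin.val_zero, pow_zero, map_one, End.one_apply, End.mul_apply] at hc h
    rw [hc, map_smul] at h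
    simpa [hb] using h
  refine generatedByAtMost_three_of_abelian_subgroup hG (Subgroup.centralizer {x}) g ?_ ?_ ?_
  · intro a ha
    rw [hmem] at ha ⊢
    have hx' : g * (z⁻¹ * x) * g⁻¹ = x := by
      rw [← mul_assoc, ← (hzc g).inv_left.eq, mul_assoc, mul_assoc, ← mul_assoc g, hgx,
        inv_mul_cancel_left]
    have h := (Commute.conj_iff g).2 (((hzc a).inv_left).mul_left ha)
    rwa [hx'] at h
  · have hz : z ^ 3 = 1 := hρ (by rw [map_pow, hρz, ← map_pow, hω3, map_one, map_one])
    have h := hpow 3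
    rw [hz, one_mul, mul_inv_eq_iff_eq_mul] at h
    exact (hmem _).2 h.symm
  · intro M hAM hgM
    rw [eq_top_iff]
    intro h _
    obtain ⟨c, hc3, hc⟩ := hscalar h
    obtain ⟨i, -, rfl⟩ := hprim.eq_pow_of_pow_eq_one hc3
    have hzi : h * x * h⁻¹ = g ^ i * x * (g ^ i)⁻¹ := by
      rw [hpow, ← mul_inv_eq_iff_eq_mul]
      exact hρ (by rw [hc, map_pow, map_pow, hρz])
    rw [← mul_inv_cancel_left (g ^ i) h]
    refine mul_mem (pow_mem hgM i) (hAM ((hmem _).2 ?_))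
    rw [mul_inv_eq_iff_eq_mul] at hzi
    rw [commute_iff_eq, mul_assoc, hzi]
    group

end Nonabelian

theorem stmt_7 (G : Subgroup (GL (Fin 3) ℂ)) [Finite G]
    (hG : IsPGroup 3 G) : GeneratedByAtMost G 3 := by
  let ρ : G →* Module.End ℂ (Fin 3 → ℂ) :=
    ((Matrix.toLinAlgEquiv' (R := ℂ) (n := Fin 3) : _ →* _).comp (Units.coeHom _)).comp G.subtype
  refine generatedByAtMost_three_of_finrank_eq_three hG (by simp) ρ ?_
  exact Matrix.toLinAlgEquiv'.injective.comp (Units.val_injective.comp G.subtype_injective)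
end

section
/- Let n be an integer with 3 < n < 9. Then every finite 3-subgroup of GLₙ(ℂ) can be generated by n elements. -/
open Matrix

/-- `RelGenerated X K m`: every normal subgroup contained in `X` is, modulo `K`,
the normal closure of at most `m` of its elements. -/
def RelGenerated {G : Type*} [Group G] (X K : Subgroup G) (m : ℕ) : Prop :=
  ∀ N : Subgroup G, N.Normal → N ≤ X →
    ∃ S : Finset G, (S : Set G) ⊆ N ∧ S.card ≤ m ∧ N ≤ Subgroup.normalClosure (S : Set G) ⊔ K

namespace RelGenerated

variable {G : Type*} [Group G] {X K L : Subgroup G} {a b : ℕ}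

lemma mono_right (h : RelGenerated X K a) (hKL : K ≤ L) : RelGenerated X L a := by
  intro N hN hNX
  obtain ⟨S, hS, hc, hle⟩ := h N hN hNX
  exact ⟨S, hS, hc, hle.trans (sup_le_sup_left hKL _)⟩

lemma of_le (h : X ≤ K) : RelGenerated X K 0 := fun _ _ hNX ↦
  ⟨∅, by simp, by simp, (hNX.trans h).trans le_sup_right⟩

lemma of_singleton
    (h : ∀ N : Subgroup G, N.Normal → N ≤ X → ∃ x ∈ N, N ≤ Subgroup.normalClosure {x} ⊔ K) :
    RelGenerated X K 1 := by
  intro N hN hNX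
  obtain ⟨x, hx, hle⟩ := h N hN hNX
  exact ⟨{x}, by simpa using hx, by simp, by simpa using hle⟩

lemma inf (hK : K.Normal) (h₁ : RelGenerated X K a) (h₂ : RelGenerated (X ⊓ K) L b) :
    RelGenerated X (K ⊓ L) (a + b) := by
  classical
  intro N hN hNX
  obtain ⟨S, hS, hSc, hSle⟩ := h₁ N hN hNX
  obtain ⟨T, hT, hTc, hTle⟩ := h₂ (N ⊓ K) inferInstance (inf_le_inf_right K hNX)
  refine ⟨S ∪ T, ?_, (Finset.card_union_le S T).trans (add_le_add hSc hTc), ?_⟩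
  · rw [Finset.coe_union]
    exact Set.union_subset hS (hT.trans inf_le_left)
  have hSN : Subgroup.normalClosure (S : Set G) ≤ N := Subgroup.normalClosure_le_normal hS
  have hTK : Subgroup.normalClosure (T : Set G) ≤ N ⊓ K := Subgroup.normalClosure_le_normal hT
  have hS' : Subgroup.normalClosure (S : Set G) ≤
      Subgroup.normalClosure ((S ∪ T : Finset G) : Set G) :=
    Subgroup.normalClosure_mono (by simp)
  have hT' : Subgroup.normalClosure (T : Set G) ≤
      Subgroup.normalClosure ((S ∪ T : Finset G) : Set G) :=
    Subgroup.normalClosure_mono (by simp)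
  intro n hn
  obtain ⟨s, hs, k, hk, rfl⟩ := Subgroup.mem_sup_of_normal_left.mp (hSle hn)
  have hkN : k ∈ N := (N.mul_mem_cancel_left (hSN hs)).mp hn
  obtain ⟨t, ht, l, hl, rfl⟩ := Subgroup.mem_sup_of_normal_left.mp (hTle ⟨hkN, hk⟩)
  have hlK : l ∈ K := (K.mul_mem_cancel_left (hTK ht).2).mp hk
  rw [← mul_assoc]
  exact Subgroup.mul_mem_sup (mul_mem (hS' hs) (hT' ht)) ⟨hlK, hl⟩

end RelGenerated

/-- A uniserial-module argument: if `δ` is nilpotent modulo `B` and the part of `N` which `δ` maps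
into `B` is generated modulo `B` by each of its elements outside `B`, then `N` is generated modulo
`B` by a single element under `δ`. -/
lemma exists_generator_of_nilpotent {M : Type*} [CommGroup M] (δ : M →* M) (N B : Subgroup M)
    (hN : ∀ a ∈ N, δ a ∈ N)
    (step : ∀ a ∈ N, ∀ b ∈ N, δ a ∈ B → δ b ∈ B → b ∉ B → ∃ k : ℤ, a * (b ^ k)⁻¹ ∈ B)
    (nil : ∃ k : ℕ, ∀ a ∈ N, δ^[k] a ∈ B) :
    ∃ x ∈ N, ∀ P : Subgroup M, x ∈ P → (∀ a ∈ P, δ a ∈ P) → N ≤ P ⊔ B := by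
  classical
  have hiter : ∀ P : Subgroup M, (∀ a ∈ P, δ a ∈ P) → ∀ j : ℕ, ∀ a ∈ P, δ^[j] a ∈ P := by
    intro P hP j
    induction j with
    | zero => simp
    | succ j ih => intro a ha; rw [Function.iterate_succ_apply]; exact ih _ (hP a ha)
  obtain hk | ⟨k, hk⟩ : Nat.find nil = 0 ∨ ∃ k, Nat.find nil = k + 1 := by
    cases Nat.find nil <;> simp
  · refine ⟨1, one_mem _, fun P _ _ a ha ↦ Subgroup.mem_sup_right ?_⟩
    have := Nat.find_spec nil a ha
    rwa [hk] at this
  have hnil : ∀ a ∈ N, δ^[k + 1] a ∈ B := hk ▸ Nat.find_spec nil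
  have hmin : ¬ ∀ a ∈ N, δ^[k] a ∈ B := Nat.find_min nil (by omega)
  push Not at hmin
  obtain ⟨x, hxN, hxB⟩ := hmin
  refine ⟨x, hxN, fun P hxP hP ↦ ?_⟩
  have key : ∀ j ≤ k + 1, ∀ y ∈ N, δ^[j] y ∈ B → y ∈ P ⊔ B := by
    intro j
    induction j with
    | zero => exact fun _ y _ hy ↦ Subgroup.mem_sup_right hy
    | succ j ih =>
      intro hj y hyN hy
      obtain ⟨m, hm⟩ := step (δ^[j] y) (hiter N hN j y hyN) (δ^[k] x) (hiter N hN k x hxN)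
        (by rwa [← Function.iterate_succ_apply' δ])
        (by rw [← Function.iterate_succ_apply' δ]; exact hnil x hxN) hxB
      set z := δ^[k - j] x with hz
      have hzP : z ∈ P := hiter P hP _ x hxP
      have hzN : z ∈ N := hiter N hN _ x hxN
      have hzk : δ^[k] x = δ^[j] z := by
        rw [hz, ← Function.iterate_add_apply]; congr 2; omega
      have := ih (by omega) (y * (z ^ m)⁻¹) (mul_mem hyN (inv_mem (zpow_mem hzN m))) (by
        rwa [iterate_map_mul, iterate_map_inv, iterate_map_zpow, ← hzk])
      have h2 : y = y * (z ^ m)⁻¹ * z ^ m := by group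
      rw [h2]
      exact mul_mem this (Subgroup.mem_sup_left (zpow_mem hzP m))
  exact fun y hy ↦ key (k + 1) le_rfl y hy (hnil y hy)

/-- A finite nilpotent group that is the normal closure of `m` elements is generated by them. -/
lemma Subgroup.closure_eq_top_of_normalClosure_eq_top {G : Type*} [Group G] [Finite G]
    [Group.IsNilpotent G] {S : Set G} (h : Subgroup.normalClosure S = ⊤) :
    Subgroup.closure S = ⊤ := by
  by_contra hS
  obtain ⟨M, hM, hle⟩ := (eq_top_or_exists_le_coatom (Subgroup.closure S)).resolve_left hS
  have : M.Normal := Subgroup.NormalizerCondition.normal_of_coatom M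
    Group.normalizerCondition_of_isNilpotent hM
  exact hM.1 (top_le_iff.mp (h ▸ Subgroup.normalClosure_le_normal
    (Subgroup.subset_closure.trans hle)))

open scoped commutatorElement in
/-- A nilpotent finite group has a self-centralizing abelian normal subgroup. -/
lemma exists_normal_commutative_centralizer_le (G : Type*) [Group G] [Finite G]
    [Group.IsNilpotent G] :
    ∃ A : Subgroup G, A.Normal ∧ IsMulCommutative A ∧ Subgroup.centralizer (A : Set G) ≤ A := by
  obtain ⟨A, ⟨hAn, hAc⟩, hmax⟩ := (Set.toFinite
    {A : Subgroup G | A.Normal ∧ A ≤ Subgroup.centralizer (A : Set G)}).exists_maximal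
    ⟨⊥, inferInstance, bot_le⟩
  refine ⟨A, hAn, Subgroup.le_centralizer_iff_isMulCommutative.mp hAc, ?_⟩
  by_contra hC
  set C := Subgroup.centralizer (A : Set G)
  have hex : ∃ i, ¬ C ⊓ Subgroup.upperCentralSeries G i ≤ A := by
    obtain ⟨n, hn⟩ := Group.IsNilpotent.nilpotent G
    exact ⟨n, by rwa [hn, inf_top_eq]⟩
  classical
  obtain ⟨i, hi, hlt⟩ : ∃ i, ¬ C ⊓ Subgroup.upperCentralSeries G (i + 1) ≤ A ∧
      C ⊓ Subgroup.upperCentralSeries G i ≤ A := by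
    have h1 := Nat.find_spec hex
    cases h : Nat.find hex with
    | zero => rw [h] at h1; simp at h1
    | succ i => rw [h] at h1; exact ⟨i, h1, not_not.mp (Nat.find_min hex (by omega))⟩
  obtain ⟨x, ⟨hxC, hxZ⟩, hxA⟩ := SetLike.not_le_iff_exists.mp hi
  have hcomm : ∀ g : G, ⁅x, g⁆ ∈ A := fun g ↦ hlt ⟨by
    rw [commutatorElement_def, mul_assoc, mul_assoc]
    refine mul_mem hxC ?_
    rw [← mul_assoc]
    exact (inferInstance : C.Normal).conj_mem _ (inv_mem hxC) g,
    Subgroup.mem_upperCentralSeries_succ_iff.mp hxZ g⟩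
  have hxA' : x ∈ A ⊔ Subgroup.zpowers x := Subgroup.mem_sup_right (Subgroup.mem_zpowers x)
  have hAA' : A ⊔ Subgroup.zpowers x ≤ C := sup_le hAc (by simpa using hxC)
  refine hxA (hmax (y := A ⊔ Subgroup.zpowers x) ⟨⟨fun n hn g ↦ ?_⟩, sup_le ?_ ?_⟩ le_sup_left hxA')
  · obtain ⟨a, ha, y, hy, rfl⟩ := Subgroup.mem_sup_of_normal_left.mp hn
    obtain ⟨k, rfl⟩ := Subgroup.mem_zpowers_iff.mp hy
    have h1 : g * (a * x ^ k) * g⁻¹ = (g * a * g⁻¹) * (g * x * g⁻¹) ^ k := by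
      rw [conj_zpow]; group
    have h2 : g * x * g⁻¹ = ⁅x, g⁆⁻¹ * x := by rw [commutatorElement_def]; group
    rw [h1, h2]
    exact mul_mem (Subgroup.mem_sup_left (hAn.conj_mem a ha g))
      (zpow_mem (Subgroup.mul_mem_sup (inv_mem (hcomm g)) (Subgroup.mem_zpowers x)) k)
  · exact Subgroup.le_centralizer_iff.mp hAA'
  · rw [Subgroup.zpowers_le, Subgroup.mem_centralizer_iff]
    intro y hy
    obtain ⟨a, ha, z, hz, rfl⟩ := Subgroup.mem_sup_of_normal_left.mp hy
    obtain ⟨k, rfl⟩ := Subgroup.mem_zpowers_iff.mp hz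
    have := Subgroup.mem_centralizer_iff.mp hxC a ha
    rw [mul_assoc, ← (Commute.self_zpow x k).eq, ← mul_assoc, this, mul_assoc]

/-- The kernel of a homomorphism defined on a subgroup, as a subgroup of the whole group. -/
def Subgroup.kerIn {G Q : Type*} [Group G] [Group Q] {A : Subgroup G} (φ : A →* Q) : Subgroup G :=
  φ.ker.map A.subtype

section Characters

variable {G Q : Type*} [Group G] [Group Q] {A : Subgroup G}

lemma Subgroup.coe_mem_kerIn {φ : A →* Q} {a : A} : (a : G) ∈ Subgroup.kerIn φ ↔ φ a = 1 := by
  simp [Subgroup.kerIn, MonoidHom.mem_ker]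

lemma Subgroup.kerIn_le (φ : A →* Q) : Subgroup.kerIn φ ≤ A := Subgroup.map_subtype_le _

lemma Subgroup.kerIn_normal [A.Normal] (φ : A →* Q)
    (h : ∀ (g : G) (a : A), φ a = 1 → φ (MulAut.conjNormal g a) = 1) :
    (Subgroup.kerIn φ).Normal := by
  refine ⟨fun n hn g ↦ ?_⟩
  lift n to A using Subgroup.kerIn_le φ hn
  rw [← MulAut.conjNormal_apply]
  exact Subgroup.coe_mem_kerIn.mpr (h g n (Subgroup.coe_mem_kerIn.mp hn))

lemma Subgroup.kerIn_normal_of_closure [A.Normal] (φ : A →* Q) {T : Set G}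
    (hT : Subgroup.closure T = ⊤)
    (h : ∀ g ∈ T, ∀ a : A, φ (MulAut.conjNormal g a) = 1 ↔ φ a = 1) :
    (Subgroup.kerIn φ).Normal := by
  have key : ∀ g : G, ∀ a : A, φ (MulAut.conjNormal g a) = 1 ↔ φ a = 1 := by
    intro g
    have hg : g ∈ Subgroup.closure T := hT ▸ Subgroup.mem_top g
    induction hg using Subgroup.closure_induction with
    | mem g hg => exact h g hg
    | one => simp
    | mul x y _ _ hx hy => intro a; rw [map_mul, MulAut.mul_apply, hx, hy]
    | inv x _ hx =>
      intro a
      rw [← hx, ← MulAut.mul_apply, ← map_mul, mul_inv_cancel, map_one, MulAut.one_apply]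
  exact Subgroup.kerIn_normal φ fun g a ↦ (key g a).mpr

lemma RelGenerated.kerIn_character [Finite G] (χ : A →* ℂˣ) :
    RelGenerated A (Subgroup.kerIn χ) 1 := by
  refine RelGenerated.of_singleton fun N hN hNA ↦ ?_
  let M : Subgroup ℂˣ := (N.subgroupOf A).map χ
  have : Finite M := (Set.toFinite ((N.subgroupOf A : Subgroup A) : Set A)).image χ
  obtain ⟨y, hgen⟩ := IsCyclic.exists_generator (α := M)
  obtain ⟨x, hx, hxy⟩ : ∃ x : A, (x : G) ∈ N ∧ χ x = y := y.2
  refine ⟨x, hx, fun n hn ↦ ?_⟩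
  lift n to A using hNA hn
  obtain ⟨k, hk⟩ := Subgroup.mem_zpowers_iff.mp (hgen ⟨χ n, n, hn, rfl⟩)
  have hk' : χ x ^ k = χ n := by rw [hxy]; exact congrArg Subtype.val hk
  have h1 : (n : G) = (x : G) ^ k * ((x ^ k)⁻¹ * n : A) := by simp
  rw [h1]
  refine Subgroup.mul_mem_sup (zpow_mem (Subgroup.subset_normalClosure (Set.mem_singleton _)) k)
    (Subgroup.coe_mem_kerIn.mpr ?_)
  rw [map_mul, map_inv, map_zpow, hk', inv_mul_cancel]

open scoped IsMulCommutative commutatorElement in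
lemma exists_relGenerated_two [Finite G] [Group.IsNilpotent G] [A.Normal] [IsMulCommutative A]
    {H : Subgroup G} (hH : H.Normal) {σ : G} (hσ : σ ^ 3 ∈ H)
    (hgen : Subgroup.closure (insert σ (H : Set G)) = ⊤) (χ : A →* ℂˣ)
    (hχ : ∀ h ∈ H, ∀ a : A, χ (MulAut.conjNormal h a) = χ a) :
    ∃ B : Subgroup G, B.Normal ∧ B ≤ Subgroup.kerIn χ ∧ RelGenerated A B 2 := by
  let f : ℕ → A →* ℂˣ := fun i ↦
    χ.comp ((MulAut.conjNormal (σ ^ i) : MulAut A) : A ≃* A).toMonoidHom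
  have hf : ∀ i a, f i a = χ (MulAut.conjNormal (σ ^ i) a) := fun _ _ ↦ rfl
  have hf0 : f 0 = χ := by ext a; simp [hf]
  have hfH : ∀ i, ∀ h ∈ H, ∀ a : A, f i (MulAut.conjNormal h a) = f i a := by
    intro i h hh a
    have : σ ^ i * h = (σ ^ i * h * (σ ^ i)⁻¹) * σ ^ i := by group
    rw [hf, hf, ← MulAut.mul_apply, ← map_mul, this, map_mul, MulAut.mul_apply,
      hχ _ (hH.conj_mem h hh _)]
  have hfσ : ∀ i, ∀ a : A, f i (MulAut.conjNormal σ a) = f (i + 1) a := by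
    intro i a
    rw [hf, hf, pow_succ, map_mul, MulAut.mul_apply]
  have hf3 : ∀ a : A, f 3 a = f 0 a := by
    intro a
    rw [hf0, hf, hχ _ hσ]
  let ν : A →* ℂˣ := f 0 * f 1 * f 2
  have hν : ∀ a, ν a = f 0 a * f 1 a * f 2 a := fun _ ↦ rfl
  let β : A →* ℂˣ × ℂˣ × ℂˣ := (f 0).prod ((f 1).prod (f 2))
  have hβ : ∀ a, β a = 1 ↔ f 0 a = 1 ∧ f 1 a = 1 ∧ f 2 a = 1 := fun a ↦ by
    simp [β, Prod.ext_iff]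
  have hνn : (Subgroup.kerIn ν).Normal := by
    refine Subgroup.kerIn_normal_of_closure ν hgen fun g hg a ↦ ?_
    obtain rfl | hg := hg
    · rw [hν, hν, hfσ, hfσ, hfσ, hf3, mul_comm, ← mul_assoc]
    · simp only [hν, hfH _ g hg]
  have hβn : (Subgroup.kerIn β).Normal := by
    refine Subgroup.kerIn_normal_of_closure β hgen fun g hg a ↦ ?_
    obtain rfl | hg := hg
    · rw [hβ, hβ, hfσ, hfσ, hfσ, hf3]; tauto
    · simp only [hβ, hfH _ g hg]
  refine ⟨Subgroup.kerIn β, hβn, fun b hb ↦ ?_, ?_⟩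
  · lift b to A using Subgroup.kerIn_le β hb
    rw [Subgroup.coe_mem_kerIn] at hb ⊢
    exact hf0 ▸ ((hβ b).mp hb).1
  refine RelGenerated.mono_right (RelGenerated.inf (a := 1) (b := 1) hνn
    (RelGenerated.kerIn_character ν) (L := Subgroup.kerIn β) ?_) inf_le_right
  refine RelGenerated.of_singleton fun N hN hNK ↦ ?_
  have hNA : N ≤ A := hNK.trans inf_le_left
  let δ : A →* A := ((MulAut.conjNormal σ : MulAut A) : A ≃* A).toMonoidHom / MonoidHom.id A
  have hδ : ∀ a : A, δ a = MulAut.conjNormal σ a * a⁻¹ := fun a ↦ by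
    simp [δ, div_eq_mul_inv]
  have hδG : ∀ a : A, ((δ a : A) : G) = σ * a * σ⁻¹ * (a : G)⁻¹ := fun a ↦ by
    simp [hδ]
  have hmemN : ∀ a ∈ N.subgroupOf A, f 0 a * f 1 a * f 2 a = 1 := fun a ha ↦
    Subgroup.coe_mem_kerIn.mp (hNK ha).2
  have hmemB : ∀ a, a ∈ β.ker ↔ f 0 a = 1 ∧ f 1 a = 1 ∧ f 2 a = 1 := fun a ↦ by
    rw [MonoidHom.mem_ker, hβ]
  have hfix : ∀ a ∈ N.subgroupOf A, δ a ∈ β.ker → f 1 a = f 0 a ∧ f 2 a = f 0 a ∧ f 0 a ^ 3 = 1 := by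
    intro a ha hδa
    rw [hmemB, hδ] at hδa
    simp only [map_mul, map_inv, hfσ, mul_inv_eq_one] at hδa
    obtain ⟨h0, h1, -⟩ := hδa
    have := hmemN a ha
    simp only [zero_add, Nat.reduceAdd] at h0 h1
    rw [h1, h0] at this
    exact ⟨h0, h1.trans h0, by rw [← this, pow_three, mul_assoc]⟩
  suffices h : ∃ x ∈ N.subgroupOf A, ∀ P : Subgroup A, x ∈ P → (∀ a ∈ P, δ a ∈ P) →
      N.subgroupOf A ≤ P ⊔ β.ker by
    obtain ⟨x, hxN, hx⟩ := h
    refine ⟨x, hxN, fun n hn ↦ ?_⟩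
    lift n to A using hNA hn
    have hle := hx ((Subgroup.normalClosure {(x : G)}).subgroupOf A)
      (Subgroup.subset_normalClosure (Set.mem_singleton _)) (fun a ha ↦ ?_) (show n ∈ N.subgroupOf A from hn)
    · obtain ⟨y, hy, z, hz, rfl⟩ := Subgroup.mem_sup.mp hle
      exact Subgroup.mul_mem_sup hy (Subgroup.coe_mem_kerIn.mpr hz)
    · rw [Subgroup.mem_subgroupOf] at ha ⊢
      rw [hδG]
      exact mul_mem (Subgroup.normalClosure_normal.conj_mem _ ha σ) (inv_mem ha)
  refine exists_generator_of_nilpotent δ (N.subgroupOf A) β.ker ?_ ?_ ?_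
  · intro a ha
    rw [Subgroup.mem_subgroupOf] at ha ⊢
    rw [hδG]
    exact mul_mem (hN.conj_mem _ ha σ) (inv_mem ha)
  · intro a ha b hb hδa hδb hbB
    obtain ⟨a1, a2, a3⟩ := hfix a ha hδa
    obtain ⟨b1, b2, b3⟩ := hfix b hb hδb
    have hb0 : f 0 b ≠ 1 := fun h ↦ hbB ((hmemB b).mpr ⟨h, b1.trans h, b2.trans h⟩)
    have hprim : IsPrimitiveRoot ((f 0 b : ℂˣ) : ℂ) 3 := by
      rw [IsPrimitiveRoot.coe_units_iff, ← orderOf_eq_prime b3 hb0]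
      exact IsPrimitiveRoot.orderOf _
    obtain ⟨k, -, hk⟩ := hprim.eq_pow_of_pow_eq_one (ξ := ((f 0 a : ℂˣ) : ℂ)) (by
      rw [← Units.val_pow_eq_pow_val, a3, Units.val_one])
    have hk' : f 0 b ^ k = f 0 a := by ext; exact_mod_cast hk
    refine ⟨k, (hmemB _).mpr ?_⟩
    simp [a1, a2, b1, b2, hk']
  · obtain ⟨n, hn⟩ := Group.IsNilpotent.nilpotent G
    refine ⟨n, fun a _ ↦ ?_⟩
    have : ∀ k, ∀ a : A, (a : G) ∈ Subgroup.upperCentralSeries G k → δ^[k] a = 1 := by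
      intro k
      induction k with
      | zero => intro a ha; simpa using ha
      | succ k ih =>
        intro a ha
        rw [Function.iterate_succ_apply]
        refine ih _ ?_
        have h1 := inv_mem (Subgroup.mem_upperCentralSeries_succ_iff.mp ha σ)
        rw [hδG]
        convert h1 using 1
        simp only [commutatorElement_def]
        group
    rw [this n a (hn ▸ Subgroup.mem_top _)]
    exact one_mem _

end Characters

section Action

variable {G : Type*} [Group G] {A : Subgroup G}

/-- The action of a group on the characters of a normal subgroup by conjugation. -/
abbrev conjCharacterAction (A : Subgroup G) [A.Normal] : MulAction G (A →* ℂˣ) where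
  smul g χ := χ.comp ((MulAut.conjNormal g⁻¹ : MulAut A) : A ≃* A).toMonoidHom
  one_smul χ := MonoidHom.ext fun a ↦ by
    change χ (MulAut.conjNormal (1 : G)⁻¹ a) = χ a
    simp
  mul_smul g h χ := MonoidHom.ext fun a ↦ by
    change χ (MulAut.conjNormal (g * h)⁻¹ a) =
      χ (MulAut.conjNormal h⁻¹ (MulAut.conjNormal g⁻¹ a))
    rw [_root_.mul_inv_rev, map_mul, MulAut.mul_apply]

attribute [local instance] conjCharacterAction

lemma conjCharacter_smul_apply [A.Normal] (g : G) (χ : A →* ℂˣ) (a : A) :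
    (g • χ) a = χ (MulAut.conjNormal g⁻¹ a) := rfl

lemma RelGenerated.mono_left {X Y K : Subgroup G} {m : ℕ} (h : RelGenerated Y K m) (hXY : X ≤ Y) :
    RelGenerated X K m := fun N hN hNX ↦ h N hN (hNX.trans hXY)

lemma RelGenerated.of_isCoatom {C : Subgroup G} (hC : IsCoatom C) : RelGenerated ⊤ C 1 := by
  refine RelGenerated.of_singleton fun N hN _ ↦ ?_
  by_cases h : N ≤ C
  · exact ⟨1, one_mem _, h.trans le_sup_right⟩
  obtain ⟨x, hx, hxC⟩ := SetLike.not_le_iff_exists.mp h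
  refine ⟨x, hx, ?_⟩
  have hxn : x ∈ Subgroup.normalClosure {x} :=
    Subgroup.subset_normalClosure (Set.mem_singleton _)
  rw [hC.2 (Subgroup.normalClosure {x} ⊔ C)
    (right_lt_sup.mpr fun hle ↦ hxC (hle hxn))]
  exact le_top

lemma Subgroup.isCoatom_of_prime_index {C : Subgroup G} (hC : C.index.Prime) : IsCoatom C := by
  refine ⟨fun h ↦ hC.one_lt.ne' (Subgroup.index_eq_one.mpr h), fun K hK ↦ ?_⟩
  have hmul := Subgroup.relIndex_mul_index hK.le
  obtain h | h := (Nat.dvd_prime hC).mp (Dvd.intro_left _ hmul)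
  · exact Subgroup.index_eq_one.mp h
  · rw [h] at hmul
    exact absurd (Subgroup.relIndex_eq_one.mp
      (Nat.eq_of_mul_eq_mul_right hC.pos (hmul.trans (one_mul _).symm))) hK.not_ge

lemma exists_relGenerated_of_orbit [Finite G] (hG : IsPGroup 3 G) [A.Normal] [IsMulCommutative A]
    (χ : A →* ℂˣ) (hχ : Nat.card (MulAction.orbit G χ) < 9) :
    ∃ (C B : Subgroup G) (a b : ℕ), a + b ≤ Nat.card (MulAction.orbit G χ) ∧
      C.Normal ∧ C ≤ MulAction.stabilizer G χ ∧ RelGenerated ⊤ C a ∧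
      B.Normal ∧ B ≤ Subgroup.kerIn χ ∧ RelGenerated A B b := by
  have : Fact (Nat.Prime 3) := ⟨Nat.prime_three⟩
  have := hG.isNilpotent
  obtain ⟨k, hk⟩ := hG.card_orbit χ
  have hindex : (MulAction.stabilizer G χ).index = 3 ^ k := by
    rw [MulAction.index_stabilizer, ← hk, Nat.card_coe_set_eq]
  rw [hk] at hχ ⊢
  obtain rfl | rfl : k = 0 ∨ k = 1 := by
    have : k < 2 := (Nat.pow_lt_pow_iff_right (by norm_num : 1 < 3)).mp (by simpa using hχ)
    omega
  · have htop : MulAction.stabilizer G χ = ⊤ := Subgroup.index_eq_one.mp (by simpa using hindex)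
    refine ⟨⊤, Subgroup.kerIn χ, 0, 1, by simp, inferInstance, htop.ge, .of_le le_rfl,
      Subgroup.kerIn_normal χ fun g a ha ↦ ?_, le_rfl, .kerIn_character χ⟩
    have hg : g⁻¹ • χ = χ := MulAction.mem_stabilizer_iff.mp (htop ▸ Subgroup.mem_top _)
    rw [← hg, conjCharacter_smul_apply, inv_inv] at ha
    exact ha
  · set H := MulAction.stabilizer G χ with hH
    rw [pow_one] at hindex
    have hco : IsCoatom H := by
      refine Subgroup.isCoatom_of_prime_index ?_
      rw [hindex]; exact Nat.prime_three
    have hHn : H.Normal := Subgroup.NormalizerCondition.normal_of_coatom H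
      Group.normalizerCondition_of_isNilpotent hco
    obtain ⟨σ, hσ⟩ : ∃ σ, σ ∉ H := by
      by_contra! h
      exact hco.1 ((Subgroup.eq_top_iff' H).mpr h)
    obtain ⟨B, hBn, hB, hrel⟩ := exists_relGenerated_two (A := A) hHn (σ := σ)
      (hindex ▸ H.pow_index_mem σ) (hco.2 _ (lt_of_le_of_ne
        (fun x hx ↦ Subgroup.subset_closure (Set.mem_insert_of_mem _ hx))
        (fun h ↦ hσ (h ▸ Subgroup.subset_closure (Set.mem_insert _ _))))) χ (fun h hh a ↦ by
          have hg : h⁻¹ • χ = χ := MulAction.mem_stabilizer_iff.mp (inv_mem hh)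
          rw [← inv_inv h, ← conjCharacter_smul_apply, hg])
    exact ⟨H, B, 1, 2, by norm_num, hHn, le_rfl, .of_isCoatom hco, hBn, hB, hrel⟩

lemma exists_relGenerated_of_stable [Finite G] (hG : IsPGroup 3 G) [A.Normal] [IsMulCommutative A]
    (Ω : Set (A →* ℂˣ)) (hfin : Ω.Finite) (hΩ : ∀ (g : G), ∀ χ ∈ Ω, g • χ ∈ Ω)
    (hcard : Ω.ncard < 9) :
    ∃ a b : ℕ, a + b ≤ Ω.ncard ∧
      RelGenerated ⊤ (⨅ χ ∈ Ω, MulAction.stabilizer G χ) a ∧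
      RelGenerated A (⨅ χ ∈ Ω, Subgroup.kerIn χ) b := by
  induction h : Ω.ncard using Nat.strong_induction_on generalizing Ω with
  | _ n ih =>
  obtain rfl | ⟨χ, hχ⟩ := Ω.eq_empty_or_nonempty
  · exact ⟨0, 0, by simp, .of_le (by simp), .of_le (by simp)⟩
  have hO : MulAction.orbit G χ ⊆ Ω := by
    rintro _ ⟨g, rfl⟩
    exact hΩ g χ hχ
  have hdiff := Set.ncard_sdiff_add_ncard_of_subset hO hfin
  have hpos : 0 < (MulAction.orbit G χ).ncard :=
    (Set.ncard_pos (hfin.subset hO)).mpr ⟨χ, MulAction.mem_orbit_self χ⟩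
  obtain ⟨C, B, a, b, hab, hCn, hC, hCa, hBn, hB, hBb⟩ :=
    exists_relGenerated_of_orbit hG χ (by rw [Nat.card_coe_set_eq]; omega)
  rw [Nat.card_coe_set_eq] at hab
  obtain ⟨a', b', hab', ha', hb'⟩ := ih (Ω \ MulAction.orbit G χ).ncard (by omega)
    (Ω \ MulAction.orbit G χ) hfin.sdiff (fun g ψ hψ ↦ ⟨hΩ g ψ hψ.1, fun hmem ↦ hψ.2 (by
      simpa using MulAction.mem_orbit_of_mem_orbit g⁻¹ hmem)⟩) (by omega) rfl
  refine ⟨a + a', b + b', by omega, ?_, ?_⟩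
  · refine (RelGenerated.inf hCn hCa (ha'.mono_left inf_le_left)).mono_right ?_
    refine le_iInf₂ fun ψ hψ ↦ ?_
    by_cases hψO : ψ ∈ MulAction.orbit G χ
    · obtain ⟨g, rfl⟩ := hψO
      refine inf_le_left.trans fun c hc ↦ ?_
      have h1 : (g⁻¹ * c * g) • χ = χ :=
        MulAction.mem_stabilizer_iff.mp (hC (by simpa using hCn.conj_mem c hc g⁻¹))
      change c • g • χ = g • χ
      rw [← inv_smul_eq_iff, smul_smul, smul_smul, h1]
    · exact inf_le_right.trans (iInf₂_le ψ ⟨hψ, hψO⟩)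
  · refine (RelGenerated.inf hBn hBb (hb'.mono_left inf_le_left)).mono_right ?_
    refine le_iInf₂ fun ψ hψ ↦ ?_
    by_cases hψO : ψ ∈ MulAction.orbit G χ
    · obtain ⟨g, rfl⟩ := hψO
      refine inf_le_left.trans fun c hc ↦ ?_
      lift c to A using Subgroup.kerIn_le χ (hB hc)
      refine Subgroup.coe_mem_kerIn.mpr (Subgroup.coe_mem_kerIn (φ := χ).mp (hB ?_))
      have := hBn.conj_mem _ hc g⁻¹
      rwa [← MulAut.conjNormal_apply] at this
    · exact inf_le_right.trans (iInf₂_le ψ ⟨hψ, hψO⟩)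

end Action

section Weights

variable {A V : Type*} [Group A] [AddCommGroup V] [Module ℂ V]

/-- The characters by which a group acts on some nonzero vector of a complex representation. -/
def weightCharacters (ρ : A →* Module.End ℂ V) : Set (A →* ℂˣ) :=
  {χ | ∃ v : V, v ≠ 0 ∧ ∀ a, ρ a v = (χ a : ℂ) • v}

variable [Finite A] [IsMulCommutative A] [FiniteDimensional ℂ V] (ρ : A →* Module.End ℂ V)

omit [IsMulCommutative A] in
lemma isFinitelySemisimple_of_finite (a : A) : (ρ a).IsFinitelySemisimple := by
  refine Module.End.isFinitelySemisimple_iff_isSemisimple.mpr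
    (Module.End.isSemisimple_of_squarefree_aeval_eq_zero
      (p := Polynomial.X ^ Nat.card A - 1) ?_ ?_)
  · exact (Polynomial.X_pow_sub_one_separable_iff.mpr (by exact_mod_cast Nat.card_pos.ne')).squarefree
  · rw [map_sub, map_pow, Polynomial.aeval_X, map_one, ← map_pow, pow_card_eq_one', map_one,
      sub_self]

omit [Finite A] [FiniteDimensional ℂ V] in
lemma commute_of_isMulCommutative (a b : A) : Commute (ρ a) (ρ b) := by
  rw [Commute, SemiconjBy, ← map_mul, ← map_mul, mul_comm' a b]

lemma weightCharacters_finite_and_ncard_le :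
    (weightCharacters ρ).Finite ∧ (weightCharacters ρ).ncard ≤ Module.finrank ℂ V := by
  have hind := (Module.End.independent_iInf_maxGenEigenspace_of_forall_mapsTo (fun a ↦ ρ a)
    (fun a b μ ↦ Module.End.mapsTo_maxGenEigenspace_of_comm
      (commute_of_isMulCommutative ρ b a) μ)).comp
    (f := fun χ : A →* ℂˣ ↦ fun a ↦ ((χ a : ℂˣ) : ℂ))
    (fun χ ψ h ↦ MonoidHom.ext fun a ↦ Units.ext (congrFun h a))
  have heq : {χ : A →* ℂˣ | ((fun χ : A → ℂ ↦ ⨅ a, (ρ a).maxGenEigenspace (χ a)) ∘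
      fun χ : A →* ℂˣ ↦ fun a ↦ ((χ a : ℂˣ) : ℂ)) χ ≠ ⊥} = weightCharacters ρ := by
    ext χ
    simp only [Set.mem_ofPred_eq, Function.comp_apply, weightCharacters, Submodule.ne_bot_iff,
      Submodule.mem_iInf, (isFinitelySemisimple_of_finite ρ _).maxGenEigenspace_eq_eigenspace,
      Module.End.mem_eigenspace_iff]
    exact exists_congr fun v ↦ and_comm
  have hfin := hind.fintypeNeBotOfFiniteDimensional
  have hcard := hind.subtype_ne_bot_le_finrank
  rw [← heq]
  refine ⟨@Set.toFinite _ _ hfin.finite, ?_⟩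
  rw [← Nat.card_coe_set_eq]
  exact (@Nat.card_eq_fintype_card _ hfin).trans_le hcard

lemma eq_one_of_forall_weightCharacters {a : A} (ha : ∀ χ ∈ weightCharacters ρ, χ a = 1) :
    ρ a = 1 := by
  have htop := Module.End.iSup_iInf_maxGenEigenspace_eq_top_of_iSup_maxGenEigenspace_eq_top_of_commute
    (fun a ↦ ρ a) (fun a b _ ↦ commute_of_isMulCommutative ρ a b)
    (fun a ↦ Module.End.iSup_maxGenEigenspace_eq_top (ρ a))
  have hle : (⊤ : Submodule ℂ V) ≤ LinearMap.eqLocus (ρ a) 1 := by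
    rw [← htop]
    refine iSup_le fun f v hv ↦ ?_
    simp only [Submodule.mem_iInf,
      (isFinitelySemisimple_of_finite ρ _).maxGenEigenspace_eq_eigenspace,
      Module.End.mem_eigenspace_iff] at hv
    by_cases hv0 : v = 0
    · simp [hv0]
    let φ : A →* ℂ :=
      { toFun := f
        map_one' := smul_left_injective ℂ hv0 (by simp [← hv])
        map_mul' := fun x y ↦ smul_left_injective ℂ hv0 (by
          simp only [← hv, map_mul, Module.End.mul_apply, mul_smul]
          rw [hv y, map_smul, hv x, smul_comm]) }
    have := ha φ.toHomUnits ⟨v, hv0, fun b ↦ by simpa [φ] using hv b⟩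
    have hfa : f a = 1 := by simpa [φ] using congrArg Units.val this
    simpa [hfa] using hv a
  exact LinearMap.ext fun v ↦ hle trivial

end Weights

theorem stmt_9 (n : ℕ) (h₁ : 3 < n) (h₂ : n < 9)
    (G : Subgroup (GL (Fin n) ℂ)) [Finite G] (hG : IsPGroup 3 G) :
    GeneratedByAtMost G n := by
  have : Fact (Nat.Prime 3) := ⟨Nat.prime_three⟩
  have := hG.isNilpotent
  obtain ⟨A, hA, hAc, hcent⟩ := exists_normal_commutative_centralizer_le G
  let θ : G →* Module.End ℂ (Fin n → ℂ) :=
    ((Matrix.toLinAlgEquiv' : Matrix (Fin n) (Fin n) ℂ ≃ₐ[ℂ] _) : _ →* _).comp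
      ((Units.coeHom _).comp G.subtype)
  have hθ : Function.Injective θ :=
    Matrix.toLinAlgEquiv'.injective.comp (Units.val_injective.comp G.subtype_injective)
  let ρ := θ.comp A.subtype
  let _ := conjCharacterAction A
  obtain ⟨hfin, hcard⟩ := weightCharacters_finite_and_ncard_le ρ
  rw [Module.finrank_fin_fun] at hcard
  have hone : ∀ a : A, (∀ χ ∈ weightCharacters ρ, χ a = 1) → a = 1 := fun a ha ↦ by
    have h := eq_one_of_forall_weightCharacters ρ ha
    rw [← map_one ρ] at h
    exact hθ.comp A.subtype_injective h
  have hstable : ∀ g : G, ∀ χ ∈ weightCharacters ρ, g • χ ∈ weightCharacters ρ := by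
    rintro g χ ⟨v, hv, hχ⟩
    have hinv : θ g⁻¹ (θ g v) = v := by
      rw [← Module.End.mul_apply, ← map_mul, inv_mul_cancel, map_one, Module.End.one_apply]
    refine ⟨θ g v, fun h ↦ hv (by rw [← hinv, h, map_zero]), fun a ↦ ?_⟩
    rw [conjCharacter_smul_apply, ← map_smul, ← hχ]
    change θ a (θ g v) = θ g (θ _ v)
    rw [← Module.End.mul_apply, ← Module.End.mul_apply, ← map_mul, ← map_mul]
    congr 2
    simp [mul_assoc]
  obtain ⟨a, b, hab, ha, hb⟩ :=
    exists_relGenerated_of_stable hG (weightCharacters ρ) hfin hstable (by omega)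
  have hstab : ⨅ χ ∈ weightCharacters ρ, MulAction.stabilizer G χ ≤ A := by
    intro g hg
    refine hcent (Subgroup.mem_centralizer_iff.mpr fun y hy ↦ ?_)
    have h := hone (MulAut.conjNormal g⁻¹ ⟨y, hy⟩ * ⟨y, hy⟩⁻¹) fun χ hχ ↦ by
      have hgχ : g • χ = χ := MulAction.mem_stabilizer_iff.mp
        (Subgroup.mem_iInf.mp (Subgroup.mem_iInf.mp hg χ) hχ)
      rw [map_mul, map_inv χ, mul_inv_eq_one, ← conjCharacter_smul_apply, hgχ]
    have h' := congrArg Subtype.val (mul_inv_eq_one.mp h)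
    rw [MulAut.conjNormal_apply, inv_inv] at h'
    change g⁻¹ * y * g = y at h'
    rw [mul_assoc, inv_mul_eq_iff_eq_mul] at h'
    exact h'
  have hker : A ⊓ ⨅ χ ∈ weightCharacters ρ, Subgroup.kerIn χ ≤ ⊥ := by
    rintro x ⟨hxA, hx⟩
    lift x to A using hxA
    rw [hone x fun χ hχ ↦ Subgroup.coe_mem_kerIn.mp
      (Subgroup.mem_iInf.mp (Subgroup.mem_iInf.mp hx χ) hχ)]
    exact one_mem _
  obtain ⟨S, -, hS, htop⟩ := (RelGenerated.inf hA (ha.mono_right hstab)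
    (hb.mono_left inf_le_right)).mono_right hker ⊤ inferInstance le_rfl
  rw [sup_bot_eq, top_le_iff] at htop
  exact ⟨S, by omega, Subgroup.closure_eq_top_of_normalClosure_eq_top htop⟩
end
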